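/- arXiv:2508.02615 — 6 statements merged into one kernel-verified Lean document; each statement's English description precedes it below -/
import Mathlib

section
/- Let (E,d_E) be a separable metric space, let p ≥ 1, let μ ∈ 𝒫_p(E) and let n ∈ ℕ. Let μ_n and μ_n' be two independent empirical measures of μ, each with sample size n (i.e., built from 2n mutually independent samples of μ). Then ‖W_p(μ_n, μ)‖_{L^p} ≤ ‖W_p(μ_n, μ_n')‖_{L^p} ≤ 2 · ‖W_p(μ_n, μ)‖_{L^p}, where for a random variable W, ‖W‖_{L^p} = (𝔼|W|^p)^{1/p}. -/
open MeasureTheory ENNReal Filter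

noncomputable section

/-- The `p`-Wasserstein distance between two measures on a metric space, as an
extended nonnegative real: the infimum over all couplings `γ` (measures on `E × E`
with the prescribed marginals) of `(∫ d(x,y)^p dγ)^(1/p)`. -/
def Wp {E : Type*} [MetricSpace E] [MeasurableSpace E] (p : ℝ) (μ ν : Measure E) : ℝ≥0∞ :=
  ⨅ γ ∈ {γ : Measure (E × E) | γ.map Prod.fst = μ ∧ γ.map Prod.snd = ν},
    (∫⁻ z, edist z.1 z.2 ^ p ∂γ) ^ (1 / p)

/-- The (uniform) discrete measure `(1/n) ∑ δ_{X i}`. -/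
def empiricalMeasure {E : Type*} [MeasurableSpace E] (n : ℕ) (X : Fin n → E) : Measure E :=
  (n : ℝ≥0∞)⁻¹ • ∑ i, Measure.dirac (X i)

/-- The law of `n` independent samples of `μ`. -/
def sampleMeasure {E : Type*} [MeasurableSpace E] (μ : Measure E) (n : ℕ) :
    Measure (Fin n → E) :=
  Measure.pi fun _ => μ

/-- `𝔼[W_p(μ_n, μ)]`, where `μ_n` is the empirical measure of `μ` with sample size `n`. -/
def expWp {E : Type*} [MetricSpace E] [MeasurableSpace E] (p : ℝ) (μ : Measure E) (n : ℕ) :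
    ℝ≥0∞ :=
  ∫⁻ X, Wp p (empiricalMeasure n X) μ ∂(sampleMeasure μ n)

/-- `(𝔼[W_p(μ_n, μ)^p])^{1/p}`, where `μ_n` is the empirical measure of `μ` with
sample size `n`. -/
def expWpPow {E : Type*} [MetricSpace E] [MeasurableSpace E] (p : ℝ) (μ : Measure E) (n : ℕ) :
    ℝ≥0∞ :=
  (∫⁻ X, (Wp p (empiricalMeasure n X) μ) ^ p ∂(sampleMeasure μ n)) ^ (1 / p)

/-- The optimal uniform quantization error
`b_{n,p}(μ) = inf_{x₁,…,x_n} W_p(μ, (1/n) ∑ δ_{x_i})`. -/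
def unifQuantErr {E : Type*} [MetricSpace E] [MeasurableSpace E] (p : ℝ) (n : ℕ)
    (μ : Measure E) : ℝ≥0∞ :=
  ⨅ x : Fin n → E, Wp p μ (empiricalMeasure n x)

/-- The optimal quantization error `e_{n,p}(μ)`: the infimum of `W_p(μ, ν)` over all
probability measures `ν` supported on at most `n` points. -/
def quantErr {E : Type*} [MetricSpace E] [MeasurableSpace E] (p : ℝ) (n : ℕ)
    (μ : Measure E) : ℝ≥0∞ :=
  ⨅ ν ∈ {ν : Measure E | IsProbabilityMeasure ν ∧
      ∃ S : Finset E, S.card ≤ n ∧ ν (↑S : Set E)ᶜ = 0}, Wp p μ ν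

/-- `μ` has a finite `p`-th moment: `∫ d(x, x₀)^p dμ(x) < ∞` for some `x₀`. -/
def HasFiniteMoment {E : Type*} [MetricSpace E] [MeasurableSpace E] (p : ℝ)
    (μ : Measure E) : Prop :=
  ∃ x₀ : E, ∫⁻ x, edist x x₀ ^ p ∂μ ≠ ∞

end

section helpers

variable {E : Type*} [MetricSpace E] [MeasurableSpace E] [BorelSpace E]

/-- Index couplings: families of measures with mass `1/n` summing to `ρ`. -/
def IdxC {E : Type*} [MeasurableSpace E] (n : ℕ) (ν : Fin n → Measure E) (ρ : Measure E) : Prop :=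
  ∑ i, ν i = ρ ∧ ∀ i, ν i Set.univ = (n : ℝ≥0∞)⁻¹

/-- Cost of an index coupling. -/
noncomputable def icost {E : Type*} [MetricSpace E] [MeasurableSpace E] (p : ℝ) {n : ℕ}
    (X : Fin n → E) (ν : Fin n → Measure E) : ℝ≥0∞ :=
  ∑ i, ∫⁻ y, edist (X i) y ^ p ∂(ν i)

lemma lintegral_emp (n : ℕ) (X : Fin n → E) (f : E → ℝ≥0∞) :
    ∫⁻ x, f x ∂(empiricalMeasure n X) = (n : ℝ≥0∞)⁻¹ * ∑ i, f (X i) := by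
  simp [empiricalMeasure, lintegral_smul_measure, lintegral_finsetSum_measure]

lemma exists_weights (n : ℕ) (X : Fin n → E) :
    ∃ w : Fin n → E → ℝ≥0∞, (∀ i, Measurable (w i)) ∧ (∀ k, ∑ i, w i (X k) = 1) ∧
      (∀ i, ∑ k, w i (X k) = 1) ∧ (∀ i x, x ≠ X i → w i x = 0) := by
  classical
  let a : E → ℝ≥0∞ := fun x => ((Finset.univ.filter (fun k => X k = x)).card : ℝ≥0∞)⁻¹
  have ha : ∀ k, ((Finset.univ.filter (fun j => X j = X k)).card : ℝ≥0∞) * a (X k) = 1 := by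
    intro k
    apply ENNReal.mul_inv_cancel
    · simp only [ne_eq, Nat.cast_eq_zero, Finset.card_eq_zero]
      exact Finset.ne_empty_of_mem (a := k) (by simp)
    · simp
  refine ⟨fun i x => if x = X i then a (X i) else 0, ?_, ?_, ?_, ?_⟩
  · intro i
    exact Measurable.ite (measurableSet_singleton (X i)) measurable_const measurable_const
  · intro k
    rw [← ha k, ← Finset.sum_filter]
    rw [Finset.sum_congr rfl (g := fun _ => a (X k))]
    · rw [Finset.sum_const, nsmul_eq_mul]
      congr 3
      ext j; simp [eq_comm]
    · intro j hj
      simp only [Finset.mem_filter] at hj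
      rw [hj.2]
  · intro i
    rw [← ha i, ← Finset.sum_filter, Finset.sum_const, nsmul_eq_mul]
  · intro i x hx
    simp [hx]

lemma Wp_le_icost {p : ℝ} {n : ℕ} (X : Fin n → E) {ν : Fin n → Measure E} {ρ : Measure E}
    [TopologicalSpace.SeparableSpace E]
    (h : IdxC n ν ρ) : Wp p (empiricalMeasure n X) ρ ≤ icost p X ν ^ (1 / p) := by
  have : SecondCountableTopology E := UniformSpace.secondCountable_of_separable E
  have hm : ∀ i, Measurable (fun y : E => (X i, y)) := fun i => measurable_prodMk_left
  let γ : Measure (E × E) := ∑ i, (ν i).map (fun y => (X i, y))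
  have hγ : ∀ f : E × E → ℝ≥0∞, Measurable f → ∫⁻ z, f z ∂γ = ∑ i, ∫⁻ y, f (X i, y) ∂(ν i) := by
    intro f hf
    simp only [γ, lintegral_finsetSum_measure]
    exact Finset.sum_congr rfl fun i _ => lintegral_map hf (hm i)
  have h1 : γ.map Prod.fst = empiricalMeasure n X := by
    refine Measure.ext_of_lintegral _ fun f hf => ?_
    rw [lintegral_map hf measurable_fst, hγ (fun z => f z.1) (hf.comp measurable_fst), lintegral_emp]
    simp [h.2, Finset.mul_sum, mul_comm]
  have h2 : γ.map Prod.snd = ρ := by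
    refine Measure.ext_of_lintegral _ fun f hf => ?_
    rw [lintegral_map hf measurable_snd, hγ (fun z => f z.2) (hf.comp measurable_snd), ← h.1,
      lintegral_finsetSum_measure]
  refine (iInf₂_le γ ⟨h1, h2⟩).trans ?_
  rw [hγ _ (by fun_prop)]
  rfl

lemma exists_icost {p : ℝ} {n : ℕ} (X : Fin n → E) {ρ : Measure E}
    [TopologicalSpace.SeparableSpace E] (γ : Measure (E × E))
    (h1 : γ.map Prod.fst = empiricalMeasure n X) (h2 : γ.map Prod.snd = ρ) :
    ∃ ν, IdxC n ν ρ ∧ icost p X ν = ∫⁻ z, edist z.1 z.2 ^ p ∂γ := by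
  have : SecondCountableTopology E := UniformSpace.secondCountable_of_separable E
  obtain ⟨w, hwm, hw1, hw2, hw0⟩ := exists_weights n X
  have hae : ∀ᵐ z ∂γ, ∑ i, w i z.1 = 1 := by
    have hms : MeasurableSet {x : E | ∑ i, w i x = 1} :=
      (Finset.measurable_sum _ fun i _ => hwm i) (measurableSet_singleton 1)
    have : ∀ᵐ x ∂(γ.map Prod.fst), ∑ i, w i x = 1 := by
      rw [h1, ae_iff]
      have := lintegral_emp n X (Set.indicator {x : E | ∑ i, w i x = 1}ᶜ 1)
      rw [lintegral_indicator_one hms.compl] at this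
      change empiricalMeasure n X ({x : E | ∑ i, w i x = 1}ᶜ) = 0
      rw [this]
      simp [hw1]
    exact (ae_map_iff measurable_fst.aemeasurable hms).1 this
  let ν : Fin n → Measure E := fun i => (γ.withDensity (fun z => w i z.1)).map Prod.snd
  have hν : ∀ i (f : E → ℝ≥0∞), Measurable f →
      ∫⁻ y, f y ∂(ν i) = ∫⁻ z, w i z.1 * f z.2 ∂γ := by
    intro i f hf
    simp only [ν]
    rw [lintegral_map hf measurable_snd]
    exact lintegral_withDensity_eq_lintegral_mul _
      ((hwm i).comp measurable_fst) (hf.comp measurable_snd)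
  refine ⟨ν, ⟨?_, ?_⟩, ?_⟩
  · refine Measure.ext_of_lintegral _ fun f hf => ?_
    rw [lintegral_finsetSum_measure, ← h2, lintegral_map hf measurable_snd]
    simp_rw [hν _ f hf]
    rw [← lintegral_finsetSum]
    · refine lintegral_congr_ae ?_
      filter_upwards [hae] with z hz
      rw [← Finset.sum_mul, hz, one_mul]
    · intro i _
      exact ((hwm i).comp measurable_fst).mul (hf.comp measurable_snd)
  · intro i
    rw [← lintegral_one, hν i _ measurable_const]
    simp only [mul_one]
    rw [← lintegral_map (hwm i) measurable_fst, h1, lintegral_emp, hw2, mul_one]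
  · unfold icost
    rw [Finset.sum_congr rfl fun i _ => hν i (fun y => edist (X i) y ^ p) (by fun_prop),
      ← lintegral_finsetSum]
    · refine lintegral_congr_ae ?_
      filter_upwards [hae] with z hz
      rw [Finset.sum_congr rfl (g := fun i => w i z.1 * edist z.1 z.2 ^ p), ← Finset.sum_mul, hz,
        one_mul]
      intro i _
      by_cases hx : z.1 = X i
      · rw [hx]
      · rw [hw0 i _ hx]; simp
    · intro i _
      exact ((hwm i).comp measurable_fst).mul (by fun_prop)

lemma le_Wp_iff {p : ℝ} {n : ℕ} (X : Fin n → E) {ρ : Measure E}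
    [TopologicalSpace.SeparableSpace E] (c : ℝ≥0∞)
    (h : ∀ ν, IdxC n ν ρ → c ≤ icost p X ν ^ (1 / p)) : c ≤ Wp p (empiricalMeasure n X) ρ := by
  refine le_iInf₂ fun γ hγ => ?_
  obtain ⟨ν, h1, h2⟩ := exists_icost (p := p) X γ hγ.1 hγ.2
  rw [← h2]
  exact h ν h1

lemma birk {n : ℕ} (P c : Fin n → Fin n → ℝ≥0∞) (hr : ∀ i, ∑ j, P i j = 1)
    (hc : ∀ j, ∑ i, P i j = 1) :
    ∃ σ : Equiv.Perm (Fin n), ∑ i, c i (σ i) ≤ ∑ i, ∑ j, P i j * c i j := by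
  classical
  have hP : ∀ i j, P i j ≠ ∞ := fun i j => by
    have : P i j ≤ 1 := by
      rw [← hr i]; exact Finset.single_le_sum (fun _ _ => zero_le) (Finset.mem_univ j)
    exact (this.trans_lt one_lt_top).ne
  let M : Matrix (Fin n) (Fin n) ℝ := fun i j => (P i j).toReal
  have hM : M ∈ doublyStochastic ℝ (Fin n) := by
    rw [mem_doublyStochastic_iff_sum]
    refine ⟨fun i j => toReal_nonneg, fun i => ?_, fun j => ?_⟩
    · simp only [M]
      rw [← ENNReal.toReal_sum (fun j _ => hP i j), hr]; simp
    · simp only [M]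
      rw [← ENNReal.toReal_sum (fun i _ => hP i j), hc]; simp
  obtain ⟨w, hw0, hw1, hwM⟩ := exists_eq_sum_perm_of_mem_doublyStochastic hM
  obtain ⟨σ, hσ⟩ := Finite.exists_min (fun σ : Equiv.Perm (Fin n) => ∑ i, c i (σ i))
  refine ⟨σ, ?_⟩
  have hPw : ∀ i j, P i j = ∑ τ : Equiv.Perm (Fin n), ENNReal.ofReal (w τ) *
      (if τ i = j then 1 else 0) := by
    intro i j
    have : M i j = ∑ τ : Equiv.Perm (Fin n), w τ * (if τ i = j then 1 else 0) := by
      rw [← hwM]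
      simp [Matrix.sum_apply, Equiv.Perm.permMatrix, PEquiv.toMatrix_apply]
    rw [← ENNReal.ofReal_toReal (hP i j)]
    change ENNReal.ofReal (M i j) = _
    rw [this, ENNReal.ofReal_sum_of_nonneg]
    · refine Finset.sum_congr rfl fun τ _ => ?_
      split_ifs <;> simp
    · intro τ _
      split_ifs <;> simp [hw0]
  have hw1' : ∑ τ, ENNReal.ofReal (w τ) = 1 := by
    rw [← ENNReal.ofReal_sum_of_nonneg (fun τ _ => hw0 τ), hw1]; simp
  calc ∑ i, c i (σ i) = ∑ τ, ENNReal.ofReal (w τ) * ∑ i, c i (σ i) := by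
        rw [← Finset.sum_mul, hw1', one_mul]
    _ ≤ ∑ τ, ENNReal.ofReal (w τ) * ∑ i, c i (τ i) := by
        exact Finset.sum_le_sum fun τ _ => mul_le_mul_right (hσ τ) _
    _ = ∑ τ, ∑ i, ∑ j, ENNReal.ofReal (w τ) * (if τ i = j then 1 else 0) * c i j := by
        refine Finset.sum_congr rfl fun τ _ => ?_
        rw [Finset.mul_sum]
        refine Finset.sum_congr rfl fun i _ => ?_
        simp
    _ = ∑ i, ∑ j, P i j * c i j := by
        rw [Finset.sum_comm]
        refine Finset.sum_congr rfl fun i _ => ?_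
        rw [Finset.sum_comm]
        refine Finset.sum_congr rfl fun j _ => ?_
        rw [hPw, Finset.sum_mul]

/-- Cost of a matching. -/
noncomputable def pcost {E : Type*} [MetricSpace E] (p : ℝ) {n : ℕ}
    (X Y : Fin n → E) (σ : Equiv.Perm (Fin n)) : ℝ≥0∞ :=
  (n : ℝ≥0∞)⁻¹ * ∑ i, edist (X i) (Y (σ i)) ^ p

lemma exists_pcost_le {p : ℝ} {n : ℕ} (hn : 1 ≤ n) (X Y : Fin n → E) {ν : Fin n → Measure E}
    (h : IdxC n ν (empiricalMeasure n Y)) : ∃ σ, pcost p X Y σ ≤ icost p X ν := by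
  obtain ⟨w, hwm, hw1, hw2, hw0⟩ := exists_weights n Y
  have hn0 : (n : ℝ≥0∞) ≠ 0 := by simp; omega
  have hnt : (n : ℝ≥0∞) ≠ ∞ := by simp
  have hms : MeasurableSet {x : E | ∑ i, w i x = 1} :=
    (Finset.measurable_sum _ fun i _ => hwm i) (measurableSet_singleton 1)
  have hae : ∀ i, ∀ᵐ x ∂(ν i), ∑ i, w i x = 1 := by
    have : ∀ᵐ x ∂(empiricalMeasure n Y), ∑ i, w i x = 1 := by
      rw [ae_iff]
      have := lintegral_emp n Y (Set.indicator {x : E | ∑ i, w i x = 1}ᶜ 1)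
      rw [lintegral_indicator_one hms.compl] at this
      change empiricalMeasure n Y ({x : E | ∑ i, w i x = 1}ᶜ) = 0
      rw [this]
      simp [hw1]
    intro i
    rw [← h.1, ae_iff] at this
    rw [ae_iff]
    simp only [Measure.coe_finsetSum, Finset.sum_apply, Finset.sum_eq_zero_iff] at this
    exact this i (Finset.mem_univ _)
  obtain ⟨σ, hσ⟩ := birk (fun i j => n * ∫⁻ y, w j y ∂(ν i)) (fun i j => edist (X i) (Y j) ^ p)
    (by
      intro i
      rw [← Finset.mul_sum, ← lintegral_finsetSum _ (fun j _ => hwm j), lintegral_congr_ae (hae i),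
        lintegral_one, h.2, ENNReal.mul_inv_cancel hn0 hnt])
    (by
      intro j
      rw [← Finset.mul_sum, ← lintegral_finsetSum_measure, h.1, lintegral_emp, hw2, mul_one,
        ENNReal.mul_inv_cancel hn0 hnt])
  refine ⟨σ, ?_⟩
  unfold pcost icost
  refine (mul_le_mul_right hσ _).trans (le_of_eq ?_)
  · · rw [Finset.mul_sum]
      refine Finset.sum_congr rfl fun i _ => ?_
      simp only [mul_assoc]
      rw [← Finset.mul_sum, ← mul_assoc, ENNReal.inv_mul_cancel hn0 hnt, one_mul]
      rw [Finset.sum_congr rfl fun j _ =>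
        (lintegral_mul_const (μ := ν i) (edist (X i) (Y j) ^ p) (hwm j)).symm]
      rw [← lintegral_finsetSum _ (fun j _ => (hwm j).mul_const _)]
      refine lintegral_congr_ae ?_
      filter_upwards [hae i] with y hy
      rw [Finset.sum_congr rfl (g := fun j => w j y * edist (X i) y ^ p), ← Finset.sum_mul, hy,
        one_mul]
      intro j _
      by_cases hx : y = Y j
      · rw [hx]
      · rw [hw0 j _ hx]; simp

lemma Wp_emp {p : ℝ} (hp : 1 ≤ p) {n : ℕ} (hn : 1 ≤ n) (X Y : Fin n → E)
    [TopologicalSpace.SeparableSpace E] :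
    Wp p (empiricalMeasure n X) (empiricalMeasure n Y) ^ p = ⨅ σ, pcost p X Y σ := by
  have hp0 : 0 < p := by linarith
  have key : Wp p (empiricalMeasure n X) (empiricalMeasure n Y) =
      (⨅ σ, pcost p X Y σ) ^ (1 / p) := by
    apply le_antisymm
    · obtain ⟨σ, hσ⟩ := exists_eq_ciInf_of_finite (f := fun σ => pcost p X Y σ)
      rw [← hσ]
      have hI : IdxC n (fun i => (n : ℝ≥0∞)⁻¹ • Measure.dirac (Y (σ i)))
          (empiricalMeasure n Y) := by
        constructor
        · rw [← Finset.smul_sum, empiricalMeasure, Equiv.sum_comp σ (fun i => Measure.dirac (Y i))]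
        · intro i; simp
      refine (Wp_le_icost X hI).trans ?_
      apply le_of_eq
      congr 1
      simp [icost, pcost, lintegral_smul_measure, Finset.mul_sum]
    · apply le_Wp_iff
      intro ν hν
      obtain ⟨σ, hσ⟩ := exists_pcost_le (p := p) hn X Y hν
      gcongr
      exact (iInf_le _ σ).trans hσ
  rw [key, ← ENNReal.rpow_mul, one_div_mul_cancel hp0.ne', ENNReal.rpow_one]


lemma mink {ι : Type*} [Fintype ι] {p : ℝ} (hp : 1 ≤ p) (ν : ι → Measure E)
    (f g : ι → E → ℝ≥0∞) (hf : ∀ i, Measurable (f i)) (hg : ∀ i, Measurable (g i)) :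
    (∑ i, ∫⁻ y, (f i y + g i y) ^ p ∂(ν i)) ^ (1 / p) ≤
      (∑ i, ∫⁻ y, f i y ^ p ∂(ν i)) ^ (1 / p) + (∑ i, ∫⁻ y, g i y ^ p ∂(ν i)) ^ (1 / p) := by
  let _ : MeasurableSpace ι := ⊤
  have hm : ∀ i : ι, Measurable (fun y : E => (i, y)) := fun i => measurable_prodMk_left
  let m : Measure (ι × E) := ∑ i, (ν i).map (fun y => (i, y))
  have hmi : ∀ F : ι × E → ℝ≥0∞, Measurable F → ∫⁻ z, F z ∂m = ∑ i, ∫⁻ y, F (i, y) ∂(ν i) := by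
    intro F hF
    simp only [m, lintegral_finsetSum_measure]
    exact Finset.sum_congr rfl fun i _ => lintegral_map hF (hm i)
  have hF : Measurable (fun z : ι × E => f z.1 z.2) :=
    measurable_from_prod_countable_right fun i => hf i
  have hG : Measurable (fun z : ι × E => g z.1 z.2) :=
    measurable_from_prod_countable_right fun i => hg i
  have key := ENNReal.lintegral_Lp_add_le (μ := m) hF.aemeasurable hG.aemeasurable hp
  simp only [Pi.add_apply] at key
  rw [hmi (fun z => (f z.1 z.2 + g z.1 z.2) ^ p) ((hF.add hG).pow_const p),
    hmi _ (hF.pow_const p), hmi _ (hG.pow_const p)] at key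
  exact key

lemma icost_tri {p : ℝ} (hp : 1 ≤ p) {n : ℕ} (X X' : Fin n → E) {ν : Fin n → Measure E}
    {ρ : Measure E} (h : IdxC n ν ρ) :
    icost p X' ν ^ (1 / p) ≤ icost p X ν ^ (1 / p) +
      (∑ i, edist (X i) (X' i) ^ p * (n : ℝ≥0∞)⁻¹) ^ (1 / p) := by
  have hp0 : 0 < p := by linarith
  have := mink hp ν (fun i y => edist (X i) y) (fun i _ => edist (X i) (X' i))
    (fun i => by fun_prop) (fun i => measurable_const)
  simp only [lintegral_const, h.2] at this
  refine le_trans ?_ this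
  unfold icost
  gcongr with i _ y
  rw [add_comm, edist_comm (X i) (X' i)]
  exact edist_triangle _ _ _

lemma measurable_Wp_emp {p : ℝ} (hp : 1 ≤ p) {n : ℕ} (hn : 1 ≤ n) (ρ : Measure E)
    [TopologicalSpace.SeparableSpace E] :
    Measurable (fun X : Fin n → E => Wp p (empiricalMeasure n X) ρ) := by
  have : SecondCountableTopology E := UniformSpace.secondCountable_of_separable E
  have hp0 : 0 < p := by linarith
  have hle : ∀ X X' : Fin n → E, Wp p (empiricalMeasure n X') ρ ≤
      Wp p (empiricalMeasure n X) ρ +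
        (∑ i, edist (X i) (X' i) ^ p * (n : ℝ≥0∞)⁻¹) ^ (1 / p) := by
    intro X X'
    rw [← tsub_le_iff_right]
    apply le_Wp_iff
    intro ν hν
    rw [tsub_le_iff_right]
    exact (Wp_le_icost X' hν).trans (icost_tri hp X X' hν)
  apply UpperSemicontinuous.measurable
  intro X y hy
  have hn0 : (n : ℝ≥0∞)⁻¹ ≠ ∞ := by simp; omega
  have hcont : Continuous (fun X' : Fin n → E =>
      (∑ i, edist (X i) (X' i) ^ p * (n : ℝ≥0∞)⁻¹) ^ (1 / p)) := by
    refine (ENNReal.continuous_rpow_const).comp ?_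
    refine continuous_finsetSum _ fun i _ => ?_
    refine (ENNReal.continuous_mul_const hn0).comp ?_
    refine (ENNReal.continuous_rpow_const).comp ?_
    fun_prop
  have ht : Tendsto (fun X' : Fin n → E => Wp p (empiricalMeasure n X) ρ +
      (∑ i, edist (X i) (X' i) ^ p * (n : ℝ≥0∞)⁻¹) ^ (1 / p)) (nhds X)
      (nhds (Wp p (empiricalMeasure n X) ρ)) := by
    have := (hcont.const_add (Wp p (empiricalMeasure n X) ρ)).tendsto X
    simpa [hp0, hp0.ne'] using this
  filter_upwards [ht.eventually_lt_const hy] with X' hX'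
  exact (hle X X').trans_lt hX'

lemma Wp_emp_tri_aux {p : ℝ} (hp : 1 ≤ p) {n : ℕ} (hn : 1 ≤ n) (X Y : Fin n → E) {μ : Measure E}
    [IsProbabilityMeasure μ]
    [TopologicalSpace.SeparableSpace E] {ν η : Fin n → Measure E}
    (hν : IdxC n ν μ) (hη : IdxC n η μ) :
    Wp p (empiricalMeasure n X) (empiricalMeasure n Y) ≤
      icost p X ν ^ (1 / p) + icost p Y η ^ (1 / p) := by
  have hp0 : 0 < p := by linarith
  have hn0 : (n : ℝ≥0∞)⁻¹ ≠ ∞ := by simp; omega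
  have hfin : ∀ j, IsFiniteMeasure (η j) := fun j => ⟨by rw [hη.2]; exact hn0.lt_top⟩
  have hleμ : ∀ (θ : Fin n → Measure E), IdxC n θ μ → ∀ j, θ j ≪ μ := by
    intro θ hθ j
    rw [← hθ.1]
    refine Measure.AbsolutelyContinuous.mk fun s _ hs => ?_
    simp only [Measure.coe_finsetSum, Finset.sum_apply, Finset.sum_eq_zero_iff] at hs
    exact hs j (Finset.mem_univ _)
  let g : Fin n → E → ℝ≥0∞ := fun j => (η j).rnDeriv μ
  have hgm : ∀ j, Measurable (g j) := fun j => Measure.measurable_rnDeriv _ _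
  have hgη : ∀ j, μ.withDensity (g j) = η j := fun j =>
    Measure.withDensity_rnDeriv_eq _ _ (hleμ η hη j)
  have hgi : ∀ j (f : E → ℝ≥0∞), Measurable f → ∫⁻ z, g j z * f z ∂μ = ∫⁻ z, f z ∂(η j) := by
    intro j f hf
    rw [← hgη j]
    exact (lintegral_withDensity_eq_lintegral_mul _ (hgm j) hf).symm
  have hsum : ∀ᵐ z ∂μ, ∑ j, g j z = 1 := by
    have hsm : Measurable (fun z => ∑ j, g j z) := Finset.measurable_sum _ fun j _ => hgm j
    refine (withDensity_eq_iff_of_sigmaFinite (f := fun z => ∑ j, g j z) (g := fun _ => 1)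
      hsm.aemeasurable aemeasurable_const).1 ?_
    refine Measure.ext_of_lintegral _ fun f hf => ?_
    rw [lintegral_withDensity_eq_lintegral_mul _ hsm hf,
      lintegral_withDensity_eq_lintegral_mul _ measurable_const hf]
    simp only [Pi.mul_apply, one_mul, Finset.sum_mul]
    rw [lintegral_finsetSum _ fun j _ => show Measurable (fun z => g j z * f z) from (hgm j).mul hf]
    rw [Finset.sum_congr rfl fun j _ => hgi j f hf, ← lintegral_finsetSum_measure, hη.1]
  have hsumν : ∀ i, ∀ᵐ z ∂(ν i), ∑ j, g j z = 1 := fun i => (hleμ ν hν i).ae_le hsum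
  let q : Fin n → Fin n → ℝ≥0∞ := fun i j => ∫⁻ z, g j z ∂(ν i)
  have hI : IdxC n (fun i => ∑ j, q i j • Measure.dirac (Y j)) (empiricalMeasure n Y) := by
    constructor
    · rw [Finset.sum_comm, empiricalMeasure, Finset.smul_sum]
      refine Finset.sum_congr rfl fun j _ => ?_
      rw [← Finset.sum_smul]
      congr 1
      simp only [q]
      rw [← lintegral_finsetSum_measure, hν.1, ← hη.2 j, ← hgη j]
      simp
    · intro i
      simp only [Measure.coe_finsetSum, Finset.sum_apply, Measure.smul_apply, measure_univ,
        smul_eq_mul, mul_one, q]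
      rw [← lintegral_finsetSum _ fun j _ => hgm j, lintegral_congr_ae (hsumν i), lintegral_one,
        hν.2]
  refine (Wp_le_icost X hI).trans ?_
  have hmk := mink (ι := Fin n × Fin n) hp (fun ij => (ν ij.1).withDensity (g ij.2))
    (fun ij z => edist (X ij.1) z) (fun ij z => edist (Y ij.2) z)
    (fun i => by fun_prop) (fun i => by fun_prop)
  have hwd : ∀ i j (f : E → ℝ≥0∞), Measurable f →
      ∫⁻ z, f z ∂((ν i).withDensity (g j)) = ∫⁻ z, g j z * f z ∂(ν i) := fun i j f hf =>
    lintegral_withDensity_eq_lintegral_mul _ (hgm j) hf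
  have e1 : ∑ ij : Fin n × Fin n, ∫⁻ z, edist (X ij.1) z ^ p ∂((ν ij.1).withDensity (g ij.2)) =
      icost p X ν := by
    rw [Fintype.sum_prod_type]
    unfold icost
    refine Finset.sum_congr rfl fun i _ => ?_
    have hm : Measurable fun z => edist (X i) z ^ p := by fun_prop
    rw [Finset.sum_congr rfl fun j _ => hwd i j _ hm,
      ← lintegral_finsetSum _ fun j _ =>
        show Measurable (fun z => g j z * edist (X i) z ^ p) from (hgm j).mul hm]
    refine lintegral_congr_ae ?_
    filter_upwards [hsumν i] with z hz
    rw [← Finset.sum_mul, hz, one_mul]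
  have e2 : ∑ ij : Fin n × Fin n, ∫⁻ z, edist (Y ij.2) z ^ p ∂((ν ij.1).withDensity (g ij.2)) =
      icost p Y η := by
    rw [Fintype.sum_prod_type_right]
    unfold icost
    refine Finset.sum_congr rfl fun j _ => ?_
    have hm : Measurable fun z => edist (Y j) z ^ p := by fun_prop
    rw [Finset.sum_congr rfl fun i _ => hwd i j _ hm, ← lintegral_finsetSum_measure, hν.1,
      hgi j _ hm]
  rw [e1, e2] at hmk
  refine le_trans ?_ hmk
  refine ENNReal.rpow_le_rpow ?_ (by positivity)
  rw [Fintype.sum_prod_type]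
  unfold icost
  refine Finset.sum_le_sum fun i _ => ?_
  rw [lintegral_finsetSum_measure]
  refine Finset.sum_le_sum fun j _ => ?_
  rw [lintegral_smul_measure, lintegral_dirac, hwd i j _ (by fun_prop), smul_eq_mul]
  simp only [q]
  rw [← lintegral_mul_const _ (hgm j)]
  refine lintegral_mono fun z => ?_
  refine mul_le_mul_right ?_ _
  refine ENNReal.rpow_le_rpow ?_ hp0.le
  rw [edist_comm (Y j) z]
  exact edist_triangle _ _ _

lemma Wp_emp_tri {p : ℝ} (hp : 1 ≤ p) {n : ℕ} (hn : 1 ≤ n) (X Y : Fin n → E) (μ : Measure E)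
    [IsProbabilityMeasure μ] [TopologicalSpace.SeparableSpace E] :
    Wp p (empiricalMeasure n X) (empiricalMeasure n Y) ≤
      Wp p (empiricalMeasure n X) μ + Wp p (empiricalMeasure n Y) μ := by
  rw [← tsub_le_iff_right]
  apply le_Wp_iff
  intro ν hν
  rw [tsub_le_iff_right, ← tsub_le_iff_left]
  apply le_Wp_iff
  intro η hη
  rw [tsub_le_iff_left]
  exact Wp_emp_tri_aux hp hn X Y hν hη

lemma exists_argmin_weights {ι Ω : Type*} [Fintype ι] [Nonempty ι] [MeasurableSpace Ω]
    (c : ι → Ω → ℝ≥0∞) (hc : ∀ i, Measurable (c i)) :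
    ∃ u : ι → Ω → ℝ≥0∞, (∀ i, Measurable (u i)) ∧ (∀ ω, ∑ i, u i ω = 1) ∧
      ∀ ω, ∑ i, u i ω * c i ω = ⨅ i, c i ω := by
  classical
  have hinf : Measurable (fun ω => ⨅ i, c i ω) := Measurable.iInf hc
  let s : ι → Ω → ℝ≥0∞ := fun i ω => if c i ω = ⨅ j, c j ω then 1 else 0
  have hs : ∀ i, Measurable (s i) := fun i =>
    Measurable.ite (measurableSet_eq_fun (hc i) hinf) measurable_const measurable_const
  have hS0 : ∀ ω, ∑ i, s i ω ≠ 0 := by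
    intro ω h
    obtain ⟨i, hi⟩ := exists_eq_ciInf_of_finite (f := fun i => c i ω)
    have := (Finset.sum_eq_zero_iff.1 h) i (Finset.mem_univ _)
    simp [s, hi] at this
  have hSt : ∀ ω, ∑ i, s i ω ≠ ∞ := by
    intro ω
    refine ENNReal.sum_ne_top.2 fun i _ => ?_
    simp only [s]
    split_ifs <;> simp
  refine ⟨fun i ω => s i ω * (∑ j, s j ω)⁻¹, ?_, ?_, ?_⟩
  · intro i
    exact (hs i).mul (Finset.measurable_sum _ fun j _ => hs j).inv
  · intro ω
    rw [← Finset.sum_mul, ENNReal.mul_inv_cancel (hS0 ω) (hSt ω)]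
  · intro ω
    rw [Finset.sum_congr rfl (g := fun i => s i ω * (∑ j, s j ω)⁻¹ * ⨅ j, c j ω),
      ← Finset.sum_mul, ← Finset.sum_mul, ENNReal.mul_inv_cancel (hS0 ω) (hSt ω), one_mul]
    intro i _
    simp only [s]
    split_ifs with h
    · rw [← h]
    · simp

lemma measurable_pcost {p : ℝ} {n : ℕ} [TopologicalSpace.SeparableSpace E]
    (σ : Equiv.Perm (Fin n)) :
    Measurable (fun ω : (Fin n → E) × (Fin n → E) => pcost p ω.1 ω.2 σ) := by
  have : SecondCountableTopology E := UniformSpace.secondCountable_of_separable E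
  unfold pcost
  fun_prop

lemma Wp_le_avg {p : ℝ} (hp : 1 ≤ p) {n : ℕ} (hn : 1 ≤ n) (X : Fin n → E) (μ : Measure E)
    [IsProbabilityMeasure μ] [TopologicalSpace.SeparableSpace E] :
    Wp p (empiricalMeasure n X) μ ^ p ≤ ∫⁻ Y, ⨅ σ, pcost p X Y σ ∂(sampleMeasure μ n) := by
  have : SecondCountableTopology E := UniformSpace.secondCountable_of_separable E
  have hp0 : 0 < p := by linarith
  have hn0 : (n : ℝ≥0∞) ≠ 0 := by simp; omega
  have hnt : (n : ℝ≥0∞) ≠ ∞ := by simp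
  obtain ⟨u, hum, hu1, huc⟩ := exists_argmin_weights (fun σ Y => pcost p X Y σ)
    (fun σ => (measurable_pcost σ).comp measurable_prodMk_left)
  have : IsProbabilityMeasure (sampleMeasure μ n) := by unfold sampleMeasure; infer_instance
  let ν : Fin n → Measure E := fun i => (n : ℝ≥0∞)⁻¹ •
    ∑ σ : Equiv.Perm (Fin n), ((sampleMeasure μ n).withDensity (u σ)).map (fun Y => Y (σ i))
  have hν : ∀ i (f : E → ℝ≥0∞), Measurable f → ∫⁻ y, f y ∂(ν i) = (n : ℝ≥0∞)⁻¹ *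
      ∑ σ : Equiv.Perm (Fin n), ∫⁻ Y, u σ Y * f (Y (σ i)) ∂(sampleMeasure μ n) := by
    intro i f hf
    simp only [ν]
    rw [lintegral_smul_measure, lintegral_finsetSum_measure, smul_eq_mul]
    congr 1
    refine Finset.sum_congr rfl fun σ _ => ?_
    rw [lintegral_map hf (measurable_pi_apply _)]
    exact lintegral_withDensity_eq_lintegral_mul _ (hum σ) (hf.comp (measurable_pi_apply _))
  have hmeas : ∀ σ j (f : E → ℝ≥0∞), Measurable f →
      Measurable (fun Y : Fin n → E => u σ Y * f (Y j)) := fun σ j f hf =>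
    (hum σ).mul (hf.comp (measurable_pi_apply _))
  have hI : IdxC n ν μ := by
    constructor
    · refine Measure.ext_of_lintegral _ fun f hf => ?_
      rw [lintegral_finsetSum_measure, Finset.sum_congr rfl fun i _ => hν i f hf,
        ← Finset.mul_sum, Finset.sum_comm]
      have : ∀ σ : Equiv.Perm (Fin n), ∑ i, ∫⁻ Y, u σ Y * f (Y (σ i)) ∂(sampleMeasure μ n) =
          ∑ j, ∫⁻ Y, u σ Y * f (Y j) ∂(sampleMeasure μ n) := fun σ =>
        Equiv.sum_comp σ (fun j => ∫⁻ Y, u σ Y * f (Y j) ∂(sampleMeasure μ n))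
      rw [Finset.sum_congr rfl fun σ _ => this σ, Finset.sum_comm]
      have h2 : ∀ j : Fin n, ∑ σ, ∫⁻ Y, u σ Y * f (Y j) ∂(sampleMeasure μ n) = ∫⁻ x, f x ∂μ := by
        intro j
        rw [← lintegral_finsetSum _ fun σ _ => hmeas σ j f hf]
        simp only [← Finset.sum_mul, hu1, one_mul]
        exact (measurePreserving_eval (fun _ : Fin n => μ) j).lintegral_comp hf
      rw [Finset.sum_congr rfl fun j _ => h2 j]
      simp only [Finset.sum_const, Finset.card_univ, Fintype.card_fin, nsmul_eq_mul]
      rw [← mul_assoc, ENNReal.inv_mul_cancel hn0 hnt, one_mul]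
    · intro i
      rw [← lintegral_one, hν i _ measurable_const]
      simp only [mul_one]
      rw [← lintegral_finsetSum _ fun σ _ => hum σ]
      simp [hu1]
  have h1 := ENNReal.rpow_le_rpow (Wp_le_icost (p := p) X hI) hp0.le
  rw [← ENNReal.rpow_mul, one_div_mul_cancel hp0.ne', ENNReal.rpow_one] at h1
  refine h1.trans (le_of_eq ?_)
  have hd : ∀ i, Measurable (fun y => edist (X i) y ^ p) := fun i => by fun_prop
  unfold icost
  rw [Finset.sum_congr rfl fun i _ => hν i _ (hd i), ← Finset.mul_sum, Finset.sum_comm,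
    Finset.sum_congr rfl fun σ _ =>
      (lintegral_finsetSum Finset.univ fun i _ => hmeas σ (σ i) _ (hd i)).symm,
    ← lintegral_finsetSum _ fun σ _ => Finset.measurable_sum _ fun i _ => hmeas σ (σ i) _ (hd i),
    ← lintegral_const_mul _ (Finset.measurable_sum _ fun σ _ =>
      Finset.measurable_sum _ fun i _ => hmeas σ (σ i) _ (hd i))]
  refine lintegral_congr fun Y => ?_
  rw [← huc Y, Finset.mul_sum]
  refine Finset.sum_congr rfl fun σ _ => ?_
  rw [← Finset.mul_sum, pcost, mul_left_comm]

end helpers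


/-- **Lemma (2samples).** Let `(E, d_E)` be a separable metric space, `p ≥ 1`,
`μ ∈ 𝒫_p(E)` and `n ∈ ℕ`. Let `μ_n` and `μ_n'` be two independent empirical measures
of `μ` with sample size `n` (built from `2n` mutually independent samples, modeled by
the product of two copies of the `n`-sample law). Then
`‖W_p(μ_n, μ)‖_{L^p} ≤ ‖W_p(μ_n, μ_n')‖_{L^p} ≤ 2 ‖W_p(μ_n, μ)‖_{L^p}`. -/
theorem stmt_10 {E : Type*} [MetricSpace E] [TopologicalSpace.SeparableSpace E]
    [MeasurableSpace E] [BorelSpace E]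
    (p : ℝ) (hp : 1 ≤ p)
    (μ : Measure E) [IsProbabilityMeasure μ] (hμ : HasFiniteMoment p μ)
    (n : ℕ) (hn : 1 ≤ n) :
    expWpPow p μ n ≤
      (∫⁻ ω : (Fin n → E) × (Fin n → E),
          (Wp p (empiricalMeasure n ω.1) (empiricalMeasure n ω.2)) ^ p
          ∂((sampleMeasure μ n).prod (sampleMeasure μ n))) ^ (1 / p) ∧
    (∫⁻ ω : (Fin n → E) × (Fin n → E),
        (Wp p (empiricalMeasure n ω.1) (empiricalMeasure n ω.2)) ^ p
        ∂((sampleMeasure μ n).prod (sampleMeasure μ n))) ^ (1 / p) ≤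
      2 * expWpPow p μ n := by
  have hp0 : 0 < p := by linarith
  have : IsProbabilityMeasure (sampleMeasure μ n) := by unfold sampleMeasure; infer_instance
  constructor
  · unfold expWpPow
    refine ENNReal.rpow_le_rpow ?_ (by positivity)
    simp only [Wp_emp hp hn]
    rw [lintegral_prod _ (Measurable.iInf fun σ => measurable_pcost σ).aemeasurable]
    exact lintegral_mono fun X => Wp_le_avg hp hn X μ
  · have hm := measurable_Wp_emp hp hn μ
    have h1 := ENNReal.lintegral_Lp_add_le
      (μ := (sampleMeasure μ n).prod (sampleMeasure μ n))
      (f := fun ω => Wp p (empiricalMeasure n ω.1) μ)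
      (g := fun ω => Wp p (empiricalMeasure n ω.2) μ)
      (hm.comp measurable_fst).aemeasurable (hm.comp measurable_snd).aemeasurable hp
    have e1 : ∫⁻ ω : (Fin n → E) × (Fin n → E), Wp p (empiricalMeasure n ω.1) μ ^ p
        ∂((sampleMeasure μ n).prod (sampleMeasure μ n)) =
        ∫⁻ X, Wp p (empiricalMeasure n X) μ ^ p ∂(sampleMeasure μ n) :=
      measurePreserving_fst.lintegral_comp (hm.pow_const p)
    have e2 : ∫⁻ ω : (Fin n → E) × (Fin n → E), Wp p (empiricalMeasure n ω.2) μ ^ p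
        ∂((sampleMeasure μ n).prod (sampleMeasure μ n)) =
        ∫⁻ X, Wp p (empiricalMeasure n X) μ ^ p ∂(sampleMeasure μ n) :=
      measurePreserving_snd.lintegral_comp (hm.pow_const p)
    rw [e1, e2, ← two_mul] at h1
    refine le_trans ?_ h1
    refine ENNReal.rpow_le_rpow ?_ (by positivity)
    refine lintegral_mono fun ω => ?_
    exact ENNReal.rpow_le_rpow (Wp_emp_tri hp hn _ _ μ) hp0.le
end

section
/- Let (E,d_E) be a separable metric space, let p ≥ 1, let μ, μ̃ ∈ 𝒫_p(E) and let n ∈ ℕ. Let μ_n be an empirical measure of μ with sample size n and let μ̃_n be an empirical measure of μ̃ with sample size n. Then | ‖W_p(μ_n, μ)‖_{L^p} − ‖W_p(μ̃_n, μ̃)‖_{L^p} | ≤ 2 · W_p(μ, μ̃), where for a random variable W, ‖W‖_{L^p} = (𝔼|W|^p)^{1/p}. -/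
open MeasureTheory ENNReal Filter

section Helpers
open ProbabilityTheory
variable {E F : Type*}

lemma Wp_le_of_coupling [MetricSpace E] [MeasurableSpace E] (p : ℝ) {μ ν : Measure E}
    (γ : Measure (E × E)) (h1 : γ.map Prod.fst = μ) (h2 : γ.map Prod.snd = ν) :
    Wp p μ ν ≤ (∫⁻ z, edist z.1 z.2 ^ p ∂γ) ^ (1 / p) :=
  iInf₂_le γ ⟨h1, h2⟩

lemma empirical_map [MeasurableSpace E] [MeasurableSpace F] (n : ℕ) (X : Fin n → E)
    {f : E → F} (hf : Measurable f) :
    (empiricalMeasure n X).map f = empiricalMeasure n (fun i => f (X i)) := by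
  unfold empiricalMeasure
  ext s hs
  rw [Measure.map_apply hf hs]
  simp only [Measure.smul_apply, Measure.finsetSum_apply]
  congr 1
  refine Finset.sum_congr rfl fun i _ => ?_
  rw [Measure.dirac_apply' _ (hf hs), Measure.dirac_apply' _ hs]
  rfl

lemma empirical_lintegral [MeasurableSpace E] (n : ℕ) (X : Fin n → E)
    {f : E → ℝ≥0∞} (hf : Measurable f) :
    ∫⁻ x, f x ∂(empiricalMeasure n X) = (n : ℝ≥0∞)⁻¹ * ∑ i, f (X i) := by
  unfold empiricalMeasure
  rw [lintegral_smul_measure, lintegral_finsetSum_measure, smul_eq_mul]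
  congr 1
  exact Finset.sum_congr rfl fun i _ => lintegral_dirac' _ hf

lemma empirical_prob [MeasurableSpace E] (n : ℕ) (hn : 1 ≤ n) (X : Fin n → E) :
    IsProbabilityMeasure (empiricalMeasure n X) := by
  constructor
  have := empirical_lintegral n X (f := fun _ => 1) measurable_const
  simp only [lintegral_const, one_mul, Finset.sum_const, Finset.card_univ, Fintype.card_fin,
    nsmul_eq_mul, mul_one] at this
  rw [this]
  exact ENNReal.inv_mul_cancel (by simp; omega) (by simp)

variable [MetricSpace E] [SecondCountableTopology E] [MeasurableSpace E] [BorelSpace E]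

lemma meas_cost (p : ℝ) : Measurable fun z : E × E => edist z.1 z.2 ^ p :=
  (measurable_fst.edist measurable_snd).pow_const p

lemma Wp_symm_le (p : ℝ) (μ ν : Measure E) : Wp p μ ν ≤ Wp p ν μ := by
  refine le_iInf₂ fun γ hγ => ?_
  refine (Wp_le_of_coupling p (γ.map Prod.swap) ?_ ?_).trans ?_
  · rw [Measure.map_map measurable_fst measurable_swap]; exact hγ.2
  · rw [Measure.map_map measurable_snd measurable_swap]; exact hγ.1
  · rw [lintegral_map (meas_cost p) measurable_swap]
    simp [edist_comm]

lemma Wp_empirical_le (p : ℝ) (n : ℕ) (X Y : Fin n → E) :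
    Wp p (empiricalMeasure n X) (empiricalMeasure n Y) ≤
      ((n : ℝ≥0∞)⁻¹ * ∑ i, edist (X i) (Y i) ^ p) ^ (1 / p) := by
  refine (Wp_le_of_coupling p (empiricalMeasure n fun i => (X i, Y i)) ?_ ?_).trans ?_
  · exact empirical_map n _ measurable_fst
  · exact empirical_map n _ measurable_snd
  · rw [empirical_lintegral n _ (meas_cost p)]

lemma avg_le (p : ℝ) (hp : 1 ≤ p) (n : ℕ) (hn : 1 ≤ n) (X Y : Fin n → E) :
    ((n : ℝ≥0∞)⁻¹ * ∑ i, edist (X i) (Y i) ^ p) ^ (1 / p) ≤ edist X Y := by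
  have hp0 : 0 < p := by linarith
  have : (n : ℝ≥0∞)⁻¹ * ∑ i, edist (X i) (Y i) ^ p ≤ edist X Y ^ p := by
    calc _ ≤ (n : ℝ≥0∞)⁻¹ * ∑ i : Fin n, edist X Y ^ p := by
          gcongr with i
          exact edist_le_pi_edist X Y i
      _ = _ := by
          simp only [Finset.sum_const, Finset.card_univ, Fintype.card_fin, nsmul_eq_mul]
          rw [← mul_assoc, ENNReal.inv_mul_cancel (by simp; omega) (by simp), one_mul]
  calc _ ≤ (edist X Y ^ p) ^ (1 / p) := by gcongr
    _ = _ := by rw [← ENNReal.rpow_mul, mul_one_div_cancel hp0.ne', ENNReal.rpow_one]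

lemma exists_index (n : ℕ) (hn : 1 ≤ n) (X : Fin n → E) :
    ∃ f : E → Fin n, Measurable f ∧ ∀ i, X (f (X i)) = X i := by
  classical
  let f : E → Fin n := fun x => if h : ∃ i, X i = x then h.choose else ⟨0, hn⟩
  have hf : ∀ i, X (f (X i)) = X i := fun i => by
    have h : ∃ j, X j = X i := ⟨i, rfl⟩
    simp only [f, dif_pos h]
    exact h.choose_spec
  refine ⟨f, ?_, hf⟩
  have hfin : (Set.range X).Finite := Set.finite_range X
  refine measurable_to_countable' fun j => ?_
  have : f ⁻¹' {j} = ((f ⁻¹' {j}) ∩ Set.range X) ∪ ((f ⁻¹' {j}) ∩ (Set.range X)ᶜ) := by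
    rw [Set.inter_union_compl]
  rw [this]
  refine (hfin.subset Set.inter_subset_right).measurableSet.union ?_
  have hc : ∀ x ∈ (Set.range X)ᶜ, f x = ⟨0, hn⟩ := fun x hx => by
    simp only [f]; rw [dif_neg]; exact hx
  by_cases hj : j = ⟨0, hn⟩
  · have : (f ⁻¹' {j}) ∩ (Set.range X)ᶜ = (Set.range X)ᶜ :=
      Set.inter_eq_right.2 fun x hx => by simp [hc x hx, hj]
    rw [this]; exact hfin.measurableSet.compl
  · have : (f ⁻¹' {j}) ∩ (Set.range X)ᶜ = ∅ := by
      ext x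
      simp only [Set.mem_inter_iff, Set.mem_preimage, Set.mem_singleton_iff, Set.mem_empty_iff_false,
        iff_false, not_and]
      intro h1 h2
      exact hj (h1.symm.trans (hc x h2))
    rw [this]; exact MeasurableSet.empty

/-- Triangle inequality when the first measure is empirical (gluing). -/
lemma Wp_triangle (p : ℝ) (hp : 1 ≤ p) (n : ℕ) (hn : 1 ≤ n) (X : Fin n → E) (b c : Measure E) :
    Wp p (empiricalMeasure n X) c ≤ Wp p (empiricalMeasure n X) b + Wp p b c := by
  haveI := empirical_prob n hn X
  haveI : Nonempty (Fin n) := ⟨⟨0, hn⟩⟩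
  unfold Wp
  simp only [ENNReal.iInf_add, ENNReal.add_iInf]
  refine le_iInf₂ fun γ' hγ' => le_iInf₂ fun γ hγ => ?_
  obtain ⟨h1, h2⟩ := hγ
  obtain ⟨h1', h2'⟩ := hγ'
  obtain ⟨f, hf, hfX⟩ := exists_index n hn X
  haveI : IsProbabilityMeasure γ := by
    constructor
    have := congrArg (fun m => m Set.univ) h1
    simpa [Measure.map_apply measurable_fst MeasurableSet.univ] using this
  haveI : IsProbabilityMeasure b := by
    rw [← h2]; exact Measure.isProbabilityMeasure_map measurable_snd.aemeasurable
  haveI : IsProbabilityMeasure γ' := by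
    constructor
    have := congrArg (fun m => m Set.univ) h1'
    simpa [Measure.map_apply measurable_fst MeasurableSet.univ] using this
  have hg : Measurable fun z : E × E => (z.2, f z.1) :=
    measurable_snd.prodMk (hf.comp measurable_fst)
  let γh : Measure (E × Fin n) := γ.map fun z => (z.2, f z.1)
  haveI : IsProbabilityMeasure γh := Measure.isProbabilityMeasure_map hg.aemeasurable
  have hfst : γh.fst = b := by
    rw [Measure.fst, Measure.map_map measurable_fst hg]; exact h2
  let κ : Kernel E (Fin n) := γh.condKernel
  have hdis : b ⊗ₘ κ = γh := by
    rw [← hfst]; exact γh.disintegrate κ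
  let G : Measure ((E × E) × Fin n) := γ' ⊗ₘ (κ.comap Prod.fst measurable_fst)
  have hG1 : G.map Prod.fst = γ' := Measure.fst_compProd _ _
  have hq : Measurable fun w : (E × E) × Fin n => (w.1.1, w.2) := by fun_prop
  have hG2 : G.map (fun w => (w.1.1, w.2)) = γh := by
    rw [← hdis]
    ext s hs
    rw [Measure.map_apply hq hs, Measure.compProd_apply (hq hs), Measure.compProd_apply hs, ← h1',
      lintegral_map (Kernel.measurable_kernel_prodMk_left hs) measurable_fst]
    rfl
  have hX : Measurable X := measurable_of_countable X
  have hXs : Measurable fun u : E × Fin n => X u.2 := hX.comp measurable_snd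
  have hr : Measurable fun w : (E × E) × Fin n => (X w.2, w.1.2) := by fun_prop
  -- the set of atoms has full measure
  have hae : ∀ᵐ z ∂γ, X (f z.1) = z.1 := by
    have hset : MeasurableSet {x : E | X (f x) = x} :=
      measurableSet_eq_fun (hX.comp hf) measurable_id
    have h0 : ∀ᵐ x ∂(empiricalMeasure n X), X (f x) = x := by
      rw [ae_iff]
      have hs' : MeasurableSet {x : E | ¬ X (f x) = x} := hset.compl
      simp only [empiricalMeasure, Measure.smul_apply, Measure.finsetSum_apply]
      simp [Measure.dirac_apply' _ hs', hfX]
    rw [← h1] at h0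
    exact ae_of_ae_map measurable_fst.aemeasurable h0
  have hm1 : (G.map fun w => (X w.2, w.1.2)).map Prod.fst = empiricalMeasure n X := by
    rw [Measure.map_map measurable_fst hr]
    have : (Prod.fst ∘ fun w : (E × E) × Fin n => (X w.2, w.1.2))
      = (fun u : E × Fin n => X u.2) ∘ (fun w => (w.1.1, w.2)) := rfl
    rw [this, ← Measure.map_map hXs hq, hG2,
      Measure.map_map hXs hg, ← h1]
    exact Measure.map_congr hae
  have hm2 : (G.map fun w => (X w.2, w.1.2)).map Prod.snd = c := by
    rw [Measure.map_map measurable_snd hr]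
    have : (Prod.snd ∘ fun w : (E × E) × Fin n => (X w.2, w.1.2))
      = Prod.snd ∘ Prod.fst := rfl
    rw [this, ← Measure.map_map measurable_snd measurable_fst, hG1, h2']
  refine (Wp_le_of_coupling p _ hm1 hm2).trans ?_
  rw [lintegral_map (meas_cost p) hr]
  have hA : Measurable fun w : (E × E) × Fin n => edist (X w.2) w.1.1 := by
    exact (hX.comp measurable_snd).edist (measurable_fst.comp measurable_fst)
  have hB : Measurable fun w : (E × E) × Fin n => edist w.1.1 w.1.2 := by
    exact (measurable_fst.comp measurable_fst).edist (measurable_snd.comp measurable_fst)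
  have hp0 : 0 ≤ p := by linarith
  calc (∫⁻ w, edist (X w.2) w.1.2 ^ p ∂G) ^ (1 / p)
      ≤ (∫⁻ w, ((fun w : (E × E) × Fin n => edist (X w.2) w.1.1) +
          fun w : (E × E) × Fin n => edist w.1.1 w.1.2) w ^ p ∂G) ^ (1 / p) := by
        gcongr with w
        exact edist_triangle _ _ _
    _ ≤ _ := ENNReal.lintegral_Lp_add_le hA.aemeasurable hB.aemeasurable hp
    _ = _ := by
        congr 2
        · have hh : Measurable fun u : E × Fin n => edist (X u.2) u.1 ^ p :=
            ((hX.comp measurable_snd).edist measurable_fst).pow_const p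
          have e1 := lintegral_map (μ := G) hh hq
          rw [hG2, lintegral_map hh hg] at e1
          rw [← e1]
          exact lintegral_congr_ae (hae.mono fun z hz => by simp only [hz])
        · conv_rhs => rw [← hG1]
          rw [lintegral_map (meas_cost p) measurable_fst]

lemma Wp_emp_measurable (p : ℝ) (hp : 1 ≤ p) (n : ℕ) (hn : 1 ≤ n) (μ : Measure E) :
    Measurable fun X : Fin n → E => Wp p (empiricalMeasure n X) μ := by
  refine Continuous.measurable (continuous_of_le_add_edist 1 (by simp) fun X Y => ?_)
  rw [one_mul, add_comm]
  refine (Wp_triangle p hp n hn X (empiricalMeasure n Y) μ).trans ?_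
  gcongr
  exact (Wp_empirical_le p n X Y).trans (avg_le p hp n hn X Y)

lemma one_side (p : ℝ) (hp : 1 ≤ p) (μ μ' : Measure E) [IsProbabilityMeasure μ]
    [IsProbabilityMeasure μ'] (n : ℕ) (hn : 1 ≤ n) :
    expWpPow p μ n ≤ expWpPow p μ' n + 2 * Wp p μ μ' := by
  have hp0 : 0 < p := by linarith
  have key : expWpPow p μ n ≤ (expWpPow p μ' n + Wp p μ μ') + Wp p μ μ' := by
    conv_rhs => enter [2]; unfold Wp
    simp only [ENNReal.add_iInf]
    refine le_iInf₂ fun γ hγ => ?_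
    obtain ⟨h1, h2⟩ := hγ
    haveI : IsProbabilityMeasure γ := by
      constructor
      have := congrArg (fun m => m Set.univ) h1
      simpa [Measure.map_apply measurable_fst MeasurableSet.univ] using this
    let P : Measure (Fin n → E × E) := Measure.pi fun _ => γ
    have hm1 : Measurable fun (Z : Fin n → E × E) i => (Z i).1 := by fun_prop
    have hm2 : Measurable fun (Z : Fin n → E × E) i => (Z i).2 := by fun_prop
    have hP1 : P.map (fun Z i => (Z i).1) = sampleMeasure μ n := by
      have := Measure.pi_map_pi (μ := fun _ : Fin n => γ) (f := fun _ => Prod.fst)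
        (hμ := fun _ => by rw [h1]; infer_instance)
        (fun _ => measurable_fst.aemeasurable)
      rw [h1] at this
      exact this
    have hP2 : P.map (fun Z i => (Z i).2) = sampleMeasure μ' n := by
      have := Measure.pi_map_pi (μ := fun _ : Fin n => γ) (f := fun _ => Prod.snd)
        (hμ := fun _ => by rw [h2]; infer_instance)
        (fun _ => measurable_snd.aemeasurable)
      rw [h2] at this
      exact this
    have hW := Wp_emp_measurable p hp n hn μ
    have hW' := Wp_emp_measurable p hp n hn μ'
    let A : (Fin n → E × E) → ℝ≥0∞ := fun Z => Wp p (empiricalMeasure n fun i => (Z i).2) μ'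
    let B : (Fin n → E × E) → ℝ≥0∞ := fun _ => Wp p μ μ'
    let C : (Fin n → E × E) → ℝ≥0∞ := fun Z =>
      ((n : ℝ≥0∞)⁻¹ * ∑ i, edist (Z i).1 (Z i).2 ^ p) ^ (1 / p)
    have hA : Measurable A := hW'.comp hm2
    have hB : Measurable B := measurable_const
    have hS : ∀ i : Fin n, Measurable fun Z : Fin n → E × E => edist (Z i).1 (Z i).2 ^ p :=
      fun i => (meas_cost p).comp (measurable_pi_apply i)
    have hC : Measurable C :=
      ((Finset.measurable_sum _ fun i _ => hS i).const_mul _).pow_const _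
    have hIA : (∫⁻ Z, A Z ^ p ∂P) ^ (1 / p) = expWpPow p μ' n := by
      unfold expWpPow
      rw [← hP2, lintegral_map (hW'.pow_const p) hm2]
    have hIB : (∫⁻ Z, B Z ^ p ∂P) ^ (1 / p) = Wp p μ μ' := by
      simp only [B, lintegral_const, measure_univ, mul_one]
      rw [← ENNReal.rpow_mul, mul_one_div_cancel hp0.ne', ENNReal.rpow_one]
    have hIC : ∫⁻ Z, C Z ^ p ∂P = ∫⁻ z, edist z.1 z.2 ^ p ∂γ := by
      have : ∀ Z, C Z ^ p = (n : ℝ≥0∞)⁻¹ * ∑ i, edist (Z i).1 (Z i).2 ^ p := fun Z => by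
        simp only [C]
        rw [← ENNReal.rpow_mul, one_div_mul_cancel hp0.ne', ENNReal.rpow_one]
      simp only [this]
      rw [lintegral_const_mul _ (Finset.measurable_sum _ fun i _ => hS i),
        lintegral_finsetSum _ fun i _ => hS i]
      have e : ∀ i, ∫⁻ Z, edist (Z i).1 (Z i).2 ^ p ∂P = ∫⁻ z, edist z.1 z.2 ^ p ∂γ := fun i =>
        (measurePreserving_eval (fun _ : Fin n => γ) i).lintegral_comp (meas_cost p)
      simp only [e, Finset.sum_const, Finset.card_univ, Fintype.card_fin, nsmul_eq_mul]
      rw [← mul_assoc, ENNReal.inv_mul_cancel (by simp; omega) (by simp), one_mul]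
    have hpt : ∀ Z : Fin n → E × E,
        Wp p (empiricalMeasure n fun i => (Z i).1) μ ≤ ((A + B) + C) Z := fun Z => by
      have t1 := Wp_triangle p hp n hn (fun i => (Z i).1)
        (empiricalMeasure n fun i => (Z i).2) μ
      have t2 := Wp_triangle p hp n hn (fun i => (Z i).2) μ' μ
      have t3 := Wp_empirical_le p n (fun i => (Z i).1) (fun i => (Z i).2)
      have t4 := Wp_symm_le p μ' μ
      calc _ ≤ _ := t1
        _ ≤ C Z + (A Z + B Z) := add_le_add t3 (t2.trans (add_le_add le_rfl t4))
        _ = _ := by rw [add_comm]; rfl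
    calc expWpPow p μ n
        = (∫⁻ Z, Wp p (empiricalMeasure n fun i => (Z i).1) μ ^ p ∂P) ^ (1 / p) := by
          unfold expWpPow
          rw [← hP1, lintegral_map (hW.pow_const p) hm1]
      _ ≤ (∫⁻ Z, ((A + B) + C) Z ^ p ∂P) ^ (1 / p) := by
          gcongr with Z
          exact hpt Z
      _ ≤ (∫⁻ Z, (A + B) Z ^ p ∂P) ^ (1 / p) + (∫⁻ Z, C Z ^ p ∂P) ^ (1 / p) :=
          ENNReal.lintegral_Lp_add_le (hA.add hB).aemeasurable hC.aemeasurable hp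
      _ ≤ _ := by
          rw [hIC]
          gcongr
          refine (ENNReal.lintegral_Lp_add_le hA.aemeasurable hB.aemeasurable hp).trans ?_
          rw [hIA, hIB]
  rwa [add_assoc, ← two_mul] at key

end Helpers

/-- **Lemma (easybound).** Let `(E, d_E)` be a separable metric space, `p ≥ 1`,
`μ, μ̃ ∈ 𝒫_p(E)` and `n ∈ ℕ`. Then
`| ‖W_p(μ_n, μ)‖_{L^p} − ‖W_p(μ̃_n, μ̃)‖_{L^p} | ≤ 2 W_p(μ, μ̃)`, stated as the pair
of one-sided inequalities (the two sides may a priori be infinite). -/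
theorem stmt_11 {E : Type*} [MetricSpace E] [TopologicalSpace.SeparableSpace E]
    [MeasurableSpace E] [BorelSpace E]
    (p : ℝ) (hp : 1 ≤ p)
    (μ μ' : Measure E) [IsProbabilityMeasure μ] [IsProbabilityMeasure μ']
    (hμ : HasFiniteMoment p μ) (hμ' : HasFiniteMoment p μ')
    (n : ℕ) (hn : 1 ≤ n) :
    expWpPow p μ n ≤ expWpPow p μ' n + 2 * Wp p μ μ' ∧
    expWpPow p μ' n ≤ expWpPow p μ n + 2 * Wp p μ μ' := by
  haveI : SecondCountableTopology E := UniformSpace.secondCountable_of_separable E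
  refine ⟨one_side p hp μ μ' n hn, (one_side p hp μ' μ n hn).trans ?_⟩
  gcongr
  exact Wp_symm_le p μ' μ
end

section
/- Let (E,d_E) be a finite metric space, let p ≥ 1 and let μ and ν be probability measures on E. Let ζ and η be (nonnegative) measures on E with ζ ≤ η ≤ μ∧ν (pointwise on singletons) and η(E) < 1. Then (1 − ζ(E))^{1/p} · W_p((μ − ζ)/(1 − ζ(E)), (ν − ζ)/(1 − ζ(E))) ≤ (1 − η(E))^{1/p} · W_p((μ − η)/(1 − η(E)), (ν − η)/(1 − η(E))). -/
open MeasureTheory ENNReal Filter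

lemma le_of_singleton_aux {E : Type*} [Fintype E] [MeasurableSpace E]
    [MeasurableSingletonClass E] (μ ν : Measure E) (h : ∀ x, μ {x} ≤ ν {x}) : μ ≤ ν := by
  classical
  refine Measure.le_iff.2 fun s _ => ?_
  have key : ∀ m : Measure E, m s = ∑ x ∈ s.toFinset, m {x} := by
    intro m
    rw [sum_measure_singleton, Set.coe_toFinset]
  rw [key μ, key ν]
  exact Finset.sum_le_sum fun x _ => h x

lemma sub_add_sub_aux {E : Type*} [MeasurableSpace E] (μ η ζ : Measure E)
    [IsFiniteMeasure η] [IsFiniteMeasure ζ] (h1 : ζ ≤ η) (h2 : η ≤ μ) :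
    (μ - η) + (η - ζ) = μ - ζ := by
  have e : ((μ - η) + (η - ζ)) + ζ = μ := by
    rw [add_assoc, Measure.sub_add_cancel_of_le h1, Measure.sub_add_cancel_of_le h2]
  conv_rhs => rw [← e]
  rw [Measure.add_sub_cancel]

/-- **Lemma (dollar2).** Let `μ` and `ν` be probability measures on a finite metric
space `E`, and let `ζ ≤ η ≤ μ∧ν` be measures on `E` (pointwise on singletons) with
`η(E) < 1`. Then
`(1 − ζ(E))^{1/p} W_p((μ−ζ)/(1−ζ(E)), (ν−ζ)/(1−ζ(E)))
  ≤ (1 − η(E))^{1/p} W_p((μ−η)/(1−η(E)), (ν−η)/(1−η(E)))`. -/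
theorem stmt_13 {E : Type*} [MetricSpace E] [Fintype E]
    [MeasurableSpace E] [BorelSpace E]
    (p : ℝ) (hp : 1 ≤ p)
    (μ ν ζ η : Measure E) [IsProbabilityMeasure μ] [IsProbabilityMeasure ν]
    (hζη : ∀ x : E, ζ {x} ≤ η {x})
    (hη : ∀ x : E, η {x} ≤ min (μ {x}) (ν {x}))
    (hη1 : η Set.univ < 1) :
    (1 - ζ Set.univ) ^ (1 / p) *
        Wp p ((1 - ζ Set.univ)⁻¹ • (μ - ζ)) ((1 - ζ Set.univ)⁻¹ • (ν - ζ))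
      ≤ (1 - η Set.univ) ^ (1 / p) *
          Wp p ((1 - η Set.univ)⁻¹ • (μ - η)) ((1 - η Set.univ)⁻¹ • (ν - η)) := by
  have hp0 : 0 < p := by linarith
  have hle1 : ζ ≤ η := le_of_singleton_aux _ _ hζη
  have hle2 : η ≤ μ := le_of_singleton_aux _ _ fun x => (hη x).trans (min_le_left _ _)
  have hle3 : η ≤ ν := le_of_singleton_aux _ _ fun x => (hη x).trans (min_le_right _ _)
  have hζ1 : ζ Set.univ < 1 := (hle1 Set.univ).trans_lt hη1
  haveI : IsFiniteMeasure η := ⟨hη1.trans ENNReal.one_lt_top⟩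
  haveI : IsFiniteMeasure ζ := ⟨hζ1.trans ENNReal.one_lt_top⟩
  have ha0 : 1 - ζ Set.univ ≠ 0 := (tsub_pos_of_lt hζ1).ne'
  have hb0 : 1 - η Set.univ ≠ 0 := (tsub_pos_of_lt hη1).ne'
  have hat : 1 - ζ Set.univ ≠ ∞ := (tsub_le_self.trans_lt ENNReal.one_lt_top).ne
  have hbt : 1 - η Set.univ ≠ ∞ := (tsub_le_self.trans_lt ENNReal.one_lt_top).ne
  have hμ := sub_add_sub_aux μ η ζ hle1 hle2
  have hν := sub_add_sub_aux ν η ζ hle1 hle3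
  generalize 1 - ζ Set.univ = a at *
  generalize 1 - η Set.univ = b at *
  have hq : 0 ≤ 1 / p := by positivity
  have hbp0 : b ^ (1 / p) ≠ 0 := by simp [ENNReal.rpow_eq_zero_iff, hb0, hbt]
  have hbpt : b ^ (1 / p) ≠ ∞ := ENNReal.rpow_ne_top_of_nonneg hq hbt
  conv_rhs => rw [Wp]
  rw [ENNReal.mul_iInf_of_ne hbp0 hbpt]
  refine le_iInf fun γ => ?_
  rw [ENNReal.mul_iInf_of_ne hbp0 hbpt]
  refine le_iInf fun hγ => ?_
  obtain ⟨h1, h2⟩ := hγ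
  have hd : Measurable (fun x : E => (x, x)) := measurable_id.prodMk measurable_id
  have hfst : (Measure.map (fun x : E => (x, x)) (η - ζ)).map Prod.fst = η - ζ := by
    rw [Measure.map_map measurable_fst hd]
    exact Measure.map_id
  have hsnd : (Measure.map (fun x : E => (x, x)) (η - ζ)).map Prod.snd = η - ζ := by
    rw [Measure.map_map measurable_snd hd]
    exact Measure.map_id
  have hdiag : ∫⁻ z, edist z.1 z.2 ^ p ∂(Measure.map (fun x : E => (x, x)) (η - ζ)) = 0 := by
    rw [lintegral_map (measurable_of_finite _) hd]
    simp [hp0]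
  have hW : Wp p (a⁻¹ • (μ - ζ)) (a⁻¹ • (ν - ζ)) ≤
      (a⁻¹ * (b * ∫⁻ z, edist z.1 z.2 ^ p ∂γ)) ^ (1 / p) := by
    refine (iInf₂_le (a⁻¹ • (b • γ + Measure.map (fun x : E => (x, x)) (η - ζ))) ?_).trans ?_
    · constructor
      · rw [Measure.map_smul, Measure.map_add _ _ measurable_fst, Measure.map_smul, hfst, h1,
          smul_smul, ENNReal.mul_inv_cancel hb0 hbt, one_smul, hμ]
      · rw [Measure.map_smul, Measure.map_add _ _ measurable_snd, Measure.map_smul, hsnd, h2,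
          smul_smul, ENNReal.mul_inv_cancel hb0 hbt, one_smul, hν]
    · rw [lintegral_smul_measure, lintegral_add_measure, hdiag, lintegral_smul_measure, add_zero]
      rfl
  refine (mul_le_mul_right hW _).trans ?_
  rw [← ENNReal.mul_rpow_of_nonneg _ _ hq, ← ENNReal.mul_rpow_of_nonneg _ _ hq, ← mul_assoc,
    ENNReal.mul_inv_cancel ha0 hat, one_mul]
end

section
/- Let (E,d_E) be a finite metric space, let p ≥ 1, let T : E → E be a map, and let μ and ν be probability measures on E. Then W_p^$(μ, ν) ≤ W_p^$(T_#μ, T_#ν) + 2^{1 − 1/p} · (∑_{x ∈ E} d_E(x, T(x))^p · |μ({x}) − ν({x})|)^{1/p}, where T_#μ denotes the pushforward of μ by T. -/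
open MeasureTheory ENNReal Filter

/-- The measure `μ∧ν` on a finite space, with `(μ∧ν)({x}) = min(μ({x}), ν({x}))`. -/
noncomputable def measInf {E : Type*} [Fintype E] [MeasurableSpace E]
    (μ ν : Measure E) : Measure E :=
  ∑ x : E, min (μ {x}) (ν {x}) • Measure.dirac x

/-- `W_p^$(μ,ν)`: equal to `0` when `μ = ν`, and otherwise to
`(1 − (μ∧ν)(E))^{1/p} W_p((μ − μ∧ν)/(1 − (μ∧ν)(E)), (ν − μ∧ν)/(1 − (μ∧ν)(E)))`. -/
noncomputable def WpDollar {E : Type*} [MetricSpace E] [Fintype E] [MeasurableSpace E]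
    (p : ℝ) (μ ν : Measure E) : ℝ≥0∞ :=
  if μ = ν then 0
  else
    (1 - measInf μ ν Set.univ) ^ (1 / p) *
      Wp p ((1 - measInf μ ν Set.univ)⁻¹ • (μ - measInf μ ν))
        ((1 - measInf μ ν Set.univ)⁻¹ • (ν - measInf μ ν))

open Classical in
lemma aux_map_sing {A B : Type*} [Fintype A] [MeasurableSpace A] [MeasurableSingletonClass A]
    [MeasurableSpace B] [MeasurableSingletonClass B] (γ : Measure A) (f : A → B) (u : B) :
    (γ.map f) {u} = ∑ z, if f z = u then γ {z} else 0 := by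
  have hm : Measurable f := measurable_of_countable f
  rw [Measure.map_apply hm (measurableSet_singleton u),
    ← lintegral_indicator_one (hm (measurableSet_singleton u)), lintegral_fintype]
  refine Finset.sum_congr rfl fun z _ => ?_
  by_cases h : f z = u <;> simp [Set.indicator, h]

lemma aux_ext {A : Type*} [Fintype A] [MeasurableSpace A] [MeasurableSingletonClass A]
    {γ δ : Measure A} (h : ∀ x, γ {x} = δ {x}) : γ = δ :=
  Measure.ext_of_singleton h

open Classical in
lemma aux_measInf_sing {E : Type*} [Fintype E] [MeasurableSpace E] [MeasurableSingletonClass E]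
    (μ ν : Measure E) (x : E) : measInf μ ν {x} = min (μ {x}) (ν {x}) := by
  unfold measInf
  rw [Measure.finsetSum_apply, Finset.sum_eq_single x]
  · simp
  · intro y _ hy
    simp [hy]
  · simp

lemma aux_measInf_le_left {E : Type*} [Fintype E] [MeasurableSpace E] [MeasurableSingletonClass E]
    (μ ν : Measure E) : measInf μ ν ≤ μ := by
  rw [Measure.le_iff]
  intro s hs
  rw [← lintegral_indicator_one hs, ← lintegral_indicator_one hs, lintegral_fintype,
    lintegral_fintype]
  refine Finset.sum_le_sum fun x _ => mul_le_mul_right ?_ _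
  rw [aux_measInf_sing]
  exact min_le_left _ _

lemma aux_measInf_comm {E : Type*} [Fintype E] [MeasurableSpace E]
    (μ ν : Measure E) : measInf μ ν = measInf ν μ := by
  unfold measInf
  simp_rw [min_comm]

lemma aux_sub_sing {E : Type*} [Fintype E] [MeasurableSpace E] [MeasurableSingletonClass E]
    (μ ν : Measure E) [IsFiniteMeasure μ] (x : E) :
    (μ - measInf μ ν) {x} = μ {x} - ν {x} := by
  have hle := aux_measInf_le_left μ ν
  have : IsFiniteMeasure (measInf μ ν) := isFiniteMeasure_of_le μ hle
  rw [Measure.sub_apply (measurableSet_singleton x) hle, aux_measInf_sing]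
  rcases le_total (μ {x}) (ν {x}) with h | h
  · simp [h, tsub_eq_zero_of_le h]
  · simp [h]

/-- Upper bound of `WpDollar` by the cost of a discrete coupling. -/
lemma aux_upper {E : Type*} [MetricSpace E] [Fintype E] [MeasurableSpace E] [BorelSpace E]
    (p : ℝ) (hp : 1 ≤ p) (μ ν : Measure E) [IsProbabilityMeasure μ] [IsProbabilityMeasure ν]
    (π : E → E → ℝ≥0∞) (h1 : ∀ x, ∑ y, π x y = μ {x} - ν {x})
    (h2 : ∀ y, ∑ x, π x y = ν {y} - μ {y}) :
    WpDollar p μ ν ≤ (∑ x, ∑ y, edist x y ^ p * π x y) ^ (1 / p) := by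
  classical
  have hp0 : 0 < 1 / p := by positivity
  unfold WpDollar
  split_ifs with h
  · exact zero_le
  set c := 1 - measInf μ ν Set.univ with hc
  have hct : c ≠ ∞ := ne_top_of_le_ne_top one_ne_top tsub_le_self
  by_cases hc0 : c = 0
  · rw [hc0, ENNReal.zero_rpow_of_pos hp0, zero_mul]
    exact zero_le
  let γ : Measure (E × E) := ∑ z : E × E, π z.1 z.2 • Measure.dirac z
  have hγ : ∀ z, γ {z} = π z.1 z.2 := by
    intro z
    simp only [γ]
    rw [Measure.finsetSum_apply, Finset.sum_eq_single z]
    · simp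
    · intro y _ hy
      simp [hy]
    · simp
  have hm1 : γ.map Prod.fst = μ - measInf μ ν := by
    apply aux_ext
    intro x
    rw [aux_map_sing, aux_sub_sing, ← h1, Fintype.sum_prod_type, Finset.sum_eq_single x]
    · simp [hγ]
    · intro y _ hy
      simp [hy]
    · simp
  have hm2 : γ.map Prod.snd = ν - measInf μ ν := by
    apply aux_ext
    intro x
    rw [aux_map_sing, aux_measInf_comm, aux_sub_sing, ← h2, Fintype.sum_prod_type_right,
      Finset.sum_eq_single x]
    · simp [hγ]
    · intro y _ hy
      simp [hy]
    · simp
  have hW : Wp p (c⁻¹ • (μ - measInf μ ν)) (c⁻¹ • (ν - measInf μ ν)) ≤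
      (∫⁻ z, edist z.1 z.2 ^ p ∂(c⁻¹ • γ)) ^ (1 / p) := by
    unfold Wp
    refine iInf₂_le (c⁻¹ • γ) ⟨?_, ?_⟩
    · rw [Measure.map_smul, hm1]
    · rw [Measure.map_smul, hm2]
  refine (mul_le_mul_right hW _).trans ?_
  rw [lintegral_smul_measure, ← ENNReal.mul_rpow_of_nonneg _ _ hp0.le, smul_eq_mul, ← mul_assoc,
    ENNReal.mul_inv_cancel hc0 hct, one_mul, lintegral_fintype, Fintype.sum_prod_type]
  simp [hγ]

/-- Lower bound of `WpDollar`. -/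
lemma aux_lower {E : Type*} [MetricSpace E] [Fintype E] [MeasurableSpace E] [BorelSpace E]
    (p : ℝ) (hp : 1 ≤ p) (μ ν : Measure E) [IsProbabilityMeasure μ] [IsProbabilityMeasure ν]
    (r : ℝ≥0∞)
    (H : ∀ π : E → E → ℝ≥0∞, (∀ x, ∑ y, π x y = μ {x} - ν {x}) →
      (∀ y, ∑ x, π x y = ν {y} - μ {y}) → r ≤ (∑ x, ∑ y, edist x y ^ p * π x y) ^ (1 / p)) :
    r ≤ WpDollar p μ ν := by
  classical
  have hp0 : 0 < 1 / p := by positivity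
  have hH0 : (∀ x, μ {x} - ν {x} = 0) → (∀ x, ν {x} - μ {x} = 0) → r = 0 := by
    intro ha hb
    have := H (fun _ _ => 0) (by simpa using fun x => (ha x).symm)
      (by simpa using fun x => (hb x).symm)
    simpa [ENNReal.zero_rpow_of_pos (lt_of_lt_of_le one_pos hp),
      lt_of_lt_of_le one_pos hp] using this
  unfold WpDollar
  split_ifs with h
  · subst h
    rw [hH0 (by simp) (by simp)]
  set c := 1 - measInf μ ν Set.univ with hc
  have hct : c ≠ ∞ := ne_top_of_le_ne_top one_ne_top tsub_le_self
  have hl1 := aux_measInf_le_left μ ν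
  have hl2 := aux_measInf_le_left ν μ
  rw [aux_measInf_comm] at hl2
  have : IsFiniteMeasure (measInf μ ν) := isFiniteMeasure_of_le μ hl1
  by_cases hc0 : c = 0
  · rw [hH0]
    · exact zero_le
    · intro x
      rw [← aux_sub_sing]
      refine measure_mono_null (Set.subset_univ _) ?_
      rw [Measure.sub_apply MeasurableSet.univ hl1, measure_univ, ← hc, hc0]
    · intro x
      rw [← aux_sub_sing, aux_measInf_comm]
      refine measure_mono_null (Set.subset_univ _) ?_
      rw [Measure.sub_apply MeasurableSet.univ hl2, measure_univ, ← hc, hc0]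
  have key : c ^ (-(1 / p)) * r ≤ Wp p (c⁻¹ • (μ - measInf μ ν)) (c⁻¹ • (ν - measInf μ ν)) := by
    unfold Wp
    refine le_iInf₂ fun γ hγ => ?_
    obtain ⟨g1, g2⟩ := hγ
    have := H (fun x y => c * γ {(x, y)}) ?_ ?_
    · calc c ^ (-(1 / p)) * r
          ≤ c ^ (-(1 / p)) * (∑ x, ∑ y, edist x y ^ p * (c * γ {(x, y)})) ^ (1 / p) := by gcongr
        _ = (∫⁻ z, edist z.1 z.2 ^ p ∂γ) ^ (1 / p) := by
          have : ∑ x, ∑ y, edist x y ^ p * (c * γ {(x, y)})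
              = c * ∫⁻ z, edist z.1 z.2 ^ p ∂γ := by
            rw [lintegral_fintype, Fintype.sum_prod_type, Finset.mul_sum]
            refine Finset.sum_congr rfl fun x _ => ?_
            rw [Finset.mul_sum]
            refine Finset.sum_congr rfl fun y _ => ?_
            ring
          rw [this, ENNReal.mul_rpow_of_nonneg _ _ hp0.le, ← mul_assoc,
            ← ENNReal.rpow_add _ _ hc0 hct]
          simp
    · intro x
      have := congrArg (fun m : Measure E => c * m {x}) g1
      simp only [aux_map_sing, Measure.smul_apply, smul_eq_mul, aux_sub_sing] at this
      rw [← mul_assoc, ENNReal.mul_inv_cancel hc0 hct, one_mul] at this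
      rw [← this, ← Finset.mul_sum, Fintype.sum_prod_type]
      congr 1
      symm
      rw [Finset.sum_eq_single x]
      · simp
      · intro y _ hy
        simp [hy]
      · simp
    · intro x
      rw [aux_measInf_comm] at g2
      have := congrArg (fun m : Measure E => c * m {x}) g2
      simp only [aux_map_sing, Measure.smul_apply, smul_eq_mul, aux_sub_sing] at this
      rw [← mul_assoc, ENNReal.mul_inv_cancel hc0 hct, one_mul] at this
      rw [← this, ← Finset.mul_sum, Fintype.sum_prod_type_right]
      congr 1
      symm
      rw [Finset.sum_eq_single x]
      · simp
      · intro y _ hy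
        simp [hy]
      · simp
  calc r = c ^ (1 / p) * (c ^ (-(1 / p)) * r) := by
        rw [← mul_assoc, ← ENNReal.rpow_add _ _ hc0 hct]
        simp
    _ ≤ _ := by gcongr

open Classical in
/-- One-sided gluing. -/
lemma aux_glue {X U V : Type*} [Fintype X] [Fintype U] [Fintype V] (T : X → U)
    (a : X → ℝ≥0∞) (ha : ∀ x, a x ≠ ∞) (γ : U → V → ℝ≥0∞)
    (h : ∀ u, ∑ v, γ u v = ∑ x, if T x = u then a x else 0) :
    ∃ π : X → V → ℝ≥0∞, (∀ x, ∑ v, π x v = a x) ∧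
      ∀ u v, (∑ x, if T x = u then π x v else 0) = γ u v := by
  set A : U → ℝ≥0∞ := fun u => ∑ x, if T x = u then a x else 0 with hA
  have hAt : ∀ u, A u ≠ ∞ := by
    intro u
    simp only [hA]
    refine ENNReal.sum_ne_top.2 fun x _ => ?_
    split_ifs
    · exact ha x
    · simp
  refine ⟨fun x v => a x * (A (T x))⁻¹ * γ (T x) v, ?_, ?_⟩
  · intro x
    rw [← Finset.mul_sum, h, mul_assoc]
    change a x * ((A (T x))⁻¹ * A (T x)) = a x
    by_cases h0 : A (T x) = 0
    · have : a x = 0 := by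
        have := (Finset.sum_eq_zero_iff.1 h0) x (Finset.mem_univ x)
        simpa using this
      simp [this]
    · rw [ENNReal.inv_mul_cancel h0 (hAt _), mul_one]
  · intro u v
    have : (∑ x, if T x = u then a x * (A (T x))⁻¹ * γ (T x) v else 0)
        = (∑ x, if T x = u then a x else 0) * ((A u)⁻¹ * γ u v) := by
      rw [Finset.sum_mul]
      refine Finset.sum_congr rfl fun x _ => ?_
      split_ifs with hx
      · rw [hx, mul_assoc]
      · simp
    rw [this]
    change A u * _ = _
    by_cases h0 : A u = 0
    · have h3 : ∑ v, γ u v = 0 := (h u).trans h0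
      have := (Finset.sum_eq_zero_iff.1 h3) v (Finset.mem_univ v)
      rw [this]
      simp
    · rw [← mul_assoc, ENNReal.mul_inv_cancel h0 (hAt _), one_mul]

open Classical in
/-- Two-sided gluing. -/
lemma aux_glue2 {X U : Type*} [Fintype X] [Fintype U] (T : X → U)
    (a b : X → ℝ≥0∞) (ha : ∀ x, a x ≠ ∞) (hb : ∀ x, b x ≠ ∞) (γ : U → U → ℝ≥0∞)
    (h1 : ∀ u, ∑ v, γ u v = ∑ x, if T x = u then a x else 0)
    (h2 : ∀ v, ∑ u, γ u v = ∑ x, if T x = v then b x else 0) :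
    ∃ π : X → X → ℝ≥0∞, (∀ x, ∑ y, π x y = a x) ∧ (∀ y, ∑ x, π x y = b y) ∧
      ∀ f : U → U → ℝ≥0∞, ∑ x, ∑ y, f (T x) (T y) * π x y = ∑ u, ∑ v, f u v * γ u v := by
  have fib : ∀ g : X → ℝ≥0∞, ∀ k : U → ℝ≥0∞,
      ∑ x, k (T x) * g x = ∑ u, k u * ∑ x, if T x = u then g x else 0 := by
    intro g k
    simp_rw [Finset.mul_sum]
    rw [Finset.sum_comm]
    refine Finset.sum_congr rfl fun x _ => ?_
    simp
  obtain ⟨π₁, p1, p2⟩ := aux_glue T a ha γ h1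
  have hs : ∀ v, ∑ x, π₁ x v = ∑ x, if T x = v then b x else 0 := by
    intro v
    rw [← h2]
    simp_rw [← p2]
    simpa using fib (fun x => π₁ x v) (fun _ => 1)
  obtain ⟨π₂, q1, q2⟩ := aux_glue T b hb (fun v x => π₁ x v) hs
  refine ⟨fun x y => π₂ y x, ?_, q1, ?_⟩
  · intro x
    rw [← p1]
    simp_rw [← q2]
    simpa using fib (fun y => π₂ y x) (fun _ => 1)
  · intro f
    have e1 : ∀ x, ∑ y, f (T x) (T y) * π₂ y x = ∑ v, f (T x) v * π₁ x v := by
      intro x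
      rw [fib (fun y => π₂ y x) (fun v => f (T x) v)]
      simp_rw [q2]
    simp_rw [e1]
    rw [Finset.sum_comm]
    have e2 : ∀ v, ∑ x, f (T x) v * π₁ x v = ∑ u, f u v * γ u v := by
      intro v
      rw [fib (fun x => π₁ x v) (fun u => f u v)]
      simp_rw [p2]
    simp_rw [e2]
    rw [Finset.sum_comm]

/-- Minkowski estimate for the glued coupling. -/
lemma aux_cost {E : Type*} [MetricSpace E] [Fintype E] (p : ℝ) (hp : 1 ≤ p) (T : E → E)
    (a b : E → ℝ≥0∞) (π : E → E → ℝ≥0∞) (h1 : ∀ x, ∑ y, π x y = a x)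
    (h2 : ∀ y, ∑ x, π x y = b y) :
    (∑ x, ∑ y, edist x y ^ p * π x y) ^ (1 / p) ≤
      (∑ x, ∑ y, edist (T x) (T y) ^ p * π x y) ^ (1 / p) +
        ENNReal.ofReal ((2 : ℝ) ^ (1 - 1 / p)) *
          (∑ x : E, edist x (T x) ^ p * (a x + b x)) ^ (1 / p) := by
  have hpp : 0 < p := lt_of_lt_of_le one_pos hp
  have hp0 : 0 < 1 / p := by positivity
  have hr : ∀ t s : ℝ≥0∞, t ^ p * s = (t * s ^ (1 / p)) ^ p := by
    intro t s
    rw [ENNReal.mul_rpow_of_nonneg _ _ hpp.le, ← ENNReal.rpow_mul, one_div,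
      inv_mul_cancel₀ hpp.ne', ENNReal.rpow_one]
  set D : E → E → ℝ≥0∞ := fun x y => edist x (T x) + edist y (T y) with hD
  have step1 : (∑ x, ∑ y, edist x y ^ p * π x y) ^ (1 / p) ≤
      (∑ x, ∑ y, edist (T x) (T y) ^ p * π x y) ^ (1 / p) +
      (∑ x, ∑ y, D x y ^ p * π x y) ^ (1 / p) := by
    have hM := ENNReal.Lp_add_le (Finset.univ : Finset (E × E))
      (fun z => edist (T z.1) (T z.2) * π z.1 z.2 ^ (1 / p))
      (fun z => D z.1 z.2 * π z.1 z.2 ^ (1 / p)) hp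
    simp_rw [← add_mul, ← hr] at hM
    simp only [Fintype.sum_prod_type] at hM
    refine le_trans ?_ hM
    gcongr with x _ y _
    calc edist x y ≤ edist x (T x) + edist (T x) (T y) + edist (T y) y := edist_triangle4 _ _ _ _
      _ = _ := by
        simp only [hD]
        rw [edist_comm (T y) y]
        ring
  refine step1.trans ?_
  gcongr
  have step2 : ∑ x, ∑ y, D x y ^ p * π x y ≤
      2 ^ (p - 1) * ∑ x : E, edist x (T x) ^ p * (a x + b x) := by
    calc ∑ x, ∑ y, D x y ^ p * π x y
        ≤ ∑ x, ∑ y, (2 ^ (p - 1) * (edist x (T x) ^ p + edist y (T y) ^ p)) * π x y := by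
          gcongr with x _ y _
          exact ENNReal.rpow_add_le_mul_rpow_add_rpow _ _ hp
      _ = 2 ^ (p - 1) * (∑ x, ∑ y, edist x (T x) ^ p * π x y +
            ∑ x, ∑ y, edist y (T y) ^ p * π x y) := by
          simp only [← Finset.sum_add_distrib, Finset.mul_sum]
          refine Finset.sum_congr rfl fun x _ => Finset.sum_congr rfl fun y _ => ?_
          ring
      _ = _ := by
          congr 1
          rw [Finset.sum_comm (f := fun x y => edist y (T y) ^ p * π x y)]
          simp_rw [← Finset.mul_sum, h1, h2, mul_add, Finset.sum_add_distrib]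
  calc (∑ x, ∑ y, D x y ^ p * π x y) ^ (1 / p)
      ≤ (2 ^ (p - 1) * ∑ x : E, edist x (T x) ^ p * (a x + b x)) ^ (1 / p) := by gcongr
    _ = _ := by
      rw [ENNReal.mul_rpow_of_nonneg _ _ hp0.le, ← ENNReal.rpow_mul,
        ← ENNReal.ofReal_rpow_of_pos two_pos]
      congr 2
      · simp
      · field_simp

/-- **Lemma (basicbound).** Let `(E, d_E)` be a finite metric space, `p ≥ 1`,
`T : E → E` a map, and `μ`, `ν` probability measures on `E`. Then
`W_p^$(μ, ν) ≤ W_p^$(T_#μ, T_#ν)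
  + 2^{1−1/p} (∑_{x ∈ E} d(x, T x)^p |μ({x}) − ν({x})|)^{1/p}`.
(For extended nonnegative reals `a, b`, the quantity `(a − b) + (b − a)`, with
truncated subtraction, equals `|a − b|`.) -/
theorem stmt_14 {E : Type*} [MetricSpace E] [Fintype E]
    [MeasurableSpace E] [BorelSpace E]
    (p : ℝ) (hp : 1 ≤ p) (T : E → E)
    (μ ν : Measure E) [IsProbabilityMeasure μ] [IsProbabilityMeasure ν] :
    WpDollar p μ ν ≤
      WpDollar p (μ.map T) (ν.map T) +
        ENNReal.ofReal ((2 : ℝ) ^ (1 - 1 / p)) *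
          (∑ x : E, edist x (T x) ^ p * ((μ {x} - ν {x}) + (ν {x} - μ {x}))) ^ (1 / p) := by
  classical
  have hsplit : ∀ s t : ℝ≥0∞, s = (s - t) + min s t := fun s t => tsub_add_min.symm
  rw [← tsub_le_iff_right]
  have := Measure.isProbabilityMeasure_map (μ := μ) (measurable_of_countable T).aemeasurable
  have := Measure.isProbabilityMeasure_map (μ := ν) (measurable_of_countable T).aemeasurable
  refine aux_lower p hp _ _ _ fun γ g1 g2 => ?_
  rw [tsub_le_iff_right]
  set a : E → ℝ≥0∞ := fun x => μ {x} - ν {x} with ha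
  set b : E → ℝ≥0∞ := fun x => ν {x} - μ {x} with hb
  have hat : ∀ x, a x ≠ ∞ := fun x => ne_top_of_le_ne_top (measure_ne_top μ {x}) tsub_le_self
  have hbt : ∀ x, b x ≠ ∞ := fun x => ne_top_of_le_ne_top (measure_ne_top ν {x}) tsub_le_self
  set A : E → ℝ≥0∞ := fun u => ∑ x, if T x = u then a x else 0 with hA
  set B : E → ℝ≥0∞ := fun u => ∑ x, if T x = u then b x else 0 with hB
  set M : E → ℝ≥0∞ := fun u => ∑ x, if T x = u then min (μ {x}) (ν {x}) else 0 with hM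
  have hMt : ∀ u, M u ≠ ∞ := by
    intro u
    refine ENNReal.sum_ne_top.2 fun x _ => ?_
    split_ifs
    · exact ne_top_of_le_ne_top (measure_ne_top μ {x}) (min_le_left _ _)
    · simp
  have hμ : ∀ u, (μ.map T) {u} = A u + M u := by
    intro u
    rw [aux_map_sing]
    simp only [hA, hM, ← Finset.sum_add_distrib]
    refine Finset.sum_congr rfl fun x _ => ?_
    split_ifs
    · exact hsplit _ _
    · simp
  have hν : ∀ u, (ν.map T) {u} = B u + M u := by
    intro u
    rw [aux_map_sing]
    simp only [hB, hM, ← Finset.sum_add_distrib]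
    refine Finset.sum_congr rfl fun x _ => ?_
    split_ifs
    · rw [min_comm]
      exact hsplit _ _
    · simp
  have g1' : ∀ u, ∑ v, γ u v = A u - B u := by
    intro u
    rw [g1, hμ, hν, ENNReal.add_sub_add_eq_sub_right (hMt u)]
  have g2' : ∀ v, ∑ u, γ u v = B v - A v := by
    intro u
    rw [g2, hμ, hν, ENNReal.add_sub_add_eq_sub_right (hMt u)]
  obtain ⟨π, q1, q2, q3⟩ := aux_glue2 T a b hat hbt
    (fun u v => γ u v + if u = v then min (A u) (B u) else 0) (by
      intro u
      rw [Finset.sum_add_distrib, g1']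
      simpa using (hsplit (A u) (B u)).symm) (by
      intro v
      rw [Finset.sum_add_distrib, g2']
      have := (hsplit (B v) (A v)).symm
      rw [min_comm] at this
      simpa using this)
  have hcost : ∑ x, ∑ y, edist (T x) (T y) ^ p * π x y = ∑ u, ∑ v, edist u v ^ p * γ u v := by
    rw [q3 (fun u v => edist u v ^ p)]
    refine Finset.sum_congr rfl fun u _ => Finset.sum_congr rfl fun v _ => ?_
    by_cases huv : u = v
    · subst huv
      simp [lt_of_lt_of_le one_pos hp]
    · simp [huv]
  refine (aux_upper p hp μ ν π q1 q2).trans ?_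
  rw [← hcost]
  exact aux_cost p hp T a b π q1 q2
end

section
/- Let E be a finite metric space with at least two points, let m ∈ ℕ, and let f₁,…,f_m : E → ℝ satisfy ‖f_i‖_Lip ≤ 1 for each i. Let s₁,…,s_m be independent Rademacher random variables (ℙ(s_i = 1) = ℙ(s_i = −1) = 1/2). Then 𝔼‖∑_{i=1}^m s_i f_i‖_Lip² ≤ 14·m·ln|E|, where |E| is the cardinality of E. -/
open MeasureTheory Filter

noncomputable section

/-- The Lipschitz seminorm `‖f‖_Lip = sup_{x ≠ y} (f x − f y)/d(x,y)` of a real-valued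
function on a metric space. -/
noncomputable def lipSeminorm {E : Type*} [MetricSpace E] (f : E → ℝ) : ℝ :=
  ⨆ q : {q : E × E // q.1 ≠ q.2}, (f q.1.1 - f q.1.2) / dist q.1.1 q.1.2

end

lemma aux_le {E : Type*} [MetricSpace E] [Fintype E] (f : E → ℝ)
    (q : {q : E × E // q.1 ≠ q.2}) :
    (f q.1.1 - f q.1.2) / dist q.1.1 q.1.2 ≤ lipSeminorm f :=
  le_ciSup (f := fun q : {q : E × E // q.1 ≠ q.2} => (f q.1.1 - f q.1.2) / dist q.1.1 q.1.2)
    (Set.finite_range _).bddAbove q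

lemma aux_abs {E : Type*} [MetricSpace E] [Fintype E] (f : E → ℝ)
    (q : {q : E × E // q.1 ≠ q.2}) :
    |(f q.1.1 - f q.1.2) / dist q.1.1 q.1.2| ≤ lipSeminorm f := by
  refine abs_le.2 ⟨?_, aux_le f q⟩
  have h := aux_le f ⟨(q.1.2, q.1.1), q.2.symm⟩
  simp only at h
  rw [dist_comm, ← neg_sub, neg_div] at h
  linarith

lemma aux_sq (c u : ℝ) (hc : 1 ≤ c) (hu : 0 ≤ u) :
    u ^ 2 ≤ c ^ 2 + 2 * c * Real.exp (u - c) := by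
  have h0 := Real.exp_pos (u - c)
  rcases le_total u c with h | h
  · have : 0 ≤ 2 * c * Real.exp (u - c) := by positivity
    nlinarith
  · have h1 := Real.quadratic_le_exp_of_nonneg (sub_nonneg.2 h)
    have h2 : 2 * c * (1 + (u - c) + (u - c) ^ 2 / 2) ≤ 2 * c * Real.exp (u - c) := by gcongr
    nlinarith [mul_nonneg (sub_nonneg.2 hc) (sq_nonneg (u - c))]

lemma aux_mgf (m : ℕ) (a : Fin m → ℝ) (ha : ∀ i, |a i| ≤ 1) (t : ℝ) :
    ∑ ε : Fin m → Bool, Real.exp (t * ∑ i, (if ε i then (1 : ℝ) else -1) * a i)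
      ≤ 2 ^ m * Real.exp (t ^ 2 * m / 2) := by
  have h1 : ∑ ε : Fin m → Bool, Real.exp (t * ∑ i, (if ε i then (1 : ℝ) else -1) * a i)
      = ∏ i : Fin m, (2 * Real.cosh (t * a i)) := by
    have h2 : ∀ i : Fin m, 2 * Real.cosh (t * a i)
        = ∑ b : Bool, Real.exp (t * ((if b then (1 : ℝ) else -1) * a i)) := by
      intro i
      rw [Real.cosh_eq]
      simp
      ring
    simp_rw [h2, Fintype.prod_sum, Finset.mul_sum, Real.exp_sum]
  rw [h1]
  calc ∏ i : Fin m, (2 * Real.cosh (t * a i))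
      ≤ ∏ i : Fin m, (2 * Real.exp (t ^ 2 / 2)) := by
        refine Finset.prod_le_prod (fun i _ => by positivity) (fun i _ => ?_)
        have h3 := Real.cosh_le_exp_half_sq (t * a i)
        have h4 : (t * a i) ^ 2 / 2 ≤ t ^ 2 / 2 := by
          have : a i ^ 2 ≤ 1 := (sq_le_one_iff_abs_le_one _).2 (ha i)
          nlinarith [sq_nonneg t]
        have h5 := Real.exp_le_exp.2 h4
        linarith
    _ = 2 ^ m * Real.exp (t ^ 2 * m / 2) := by
        rw [Finset.prod_const, Finset.card_univ, Fintype.card_fin, mul_pow, ← Real.exp_nat_mul]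
        congr 2
        ring

set_option maxHeartbeats 400000 in
/-- **Lemma (Lipbound).** Let `E` be a finite metric space with at least two points,
and let `f₁, …, f_m : E → ℝ` satisfy `‖f_i‖_Lip ≤ 1`. Let `s₁, …, s_m` be independent
Rademacher random variables (modeled by averaging over all sign patterns
`ε : Fin m → Bool`, with `s_i = 1` if `ε i` and `s_i = −1` otherwise). Then
`𝔼 ‖∑ s_i f_i‖_Lip² ≤ 14 m ln |E|`. -/
theorem stmt_16 {E : Type*} [MetricSpace E] [Fintype E] (hE : 2 ≤ Fintype.card E)
    (m : ℕ) (hm : 1 ≤ m) (f : Fin m → E → ℝ) (hf : ∀ i, lipSeminorm (f i) ≤ 1) :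
    (1 / 2 ^ m : ℝ) *
        ∑ ε : Fin m → Bool,
          (lipSeminorm (fun x => ∑ i, (if ε i then (1 : ℝ) else -1) * f i x)) ^ 2
      ≤ 14 * m * Real.log (Fintype.card E) := by
  classical
  set l := Real.log (Fintype.card E) with hl
  have hn : (2 : ℝ) ≤ Fintype.card E := by exact_mod_cast hE
  have hl2 : 0.69 < l := by
    have h1 : Real.log 2 ≤ l := Real.log_le_log (by norm_num) hn
    have h2 := Real.log_two_gt_d9
    linarith
  have hm' : (1 : ℝ) ≤ m := by exact_mod_cast hm
  have hm0 : (0 : ℝ) < m := by linarith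
  obtain ⟨x, y, hxy⟩ := Fintype.exists_pair_of_one_lt_card (show 1 < Fintype.card E by omega)
  have hne : Nonempty {q : E × E // q.1 ≠ q.2} := ⟨⟨(x, y), hxy⟩⟩
  set t := Real.sqrt (4 * l / m) with ht
  have ht2 : t ^ 2 * m = 4 * l := by
    rw [ht, Real.sq_sqrt (by positivity)]
    field_simp
  have ht0 : 0 ≤ t := Real.sqrt_nonneg _
  set F : (Fin m → Bool) → E → ℝ :=
    fun ε x => ∑ i, (if ε i then (1 : ℝ) else -1) * f i x with hF
  set X : {q : E × E // q.1 ≠ q.2} → Fin m → ℝ :=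
    fun q i => (f i q.1.1 - f i q.1.2) / dist q.1.1 q.1.2 with hX
  have hX1 : ∀ q i, |X q i| ≤ 1 := fun q i => (aux_abs (f i) q).trans (hf i)
  have hFX : ∀ ε (q : {q : E × E // q.1 ≠ q.2}),
      (F ε q.1.1 - F ε q.1.2) / dist q.1.1 q.1.2
        = ∑ i, (if ε i then (1 : ℝ) else -1) * X q i := by
    intro ε q
    simp only [hF, hX]
    rw [← Finset.sum_sub_distrib, Finset.sum_div]
    exact Finset.sum_congr rfl fun i _ => by ring
  have hL0 : ∀ ε, 0 ≤ lipSeminorm (F ε) := fun ε =>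
    (abs_nonneg _).trans (aux_abs (F ε) ⟨(x, y), hxy⟩)
  have hexp : ∀ ε, Real.exp (t * lipSeminorm (F ε)) ≤
      ∑ q : {q : E × E // q.1 ≠ q.2},
        Real.exp (t * ∑ i, (if ε i then (1 : ℝ) else -1) * X q i) := by
    intro ε
    obtain ⟨q, hq⟩ := exists_eq_ciSup_of_finite
      (f := fun q : {q : E × E // q.1 ≠ q.2} => (F ε q.1.1 - F ε q.1.2) / dist q.1.1 q.1.2)
    have hq' : lipSeminorm (F ε) = ∑ i, (if ε i then (1 : ℝ) else -1) * X q i := by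
      rw [← hFX, hq]; rfl
    rw [hq']
    exact Finset.single_le_sum
      (f := fun q => Real.exp (t * ∑ i, (if ε i then (1 : ℝ) else -1) * X q i))
      (fun _ _ => (Real.exp_pos _).le) (Finset.mem_univ q)
  have hcard : (Fintype.card {q : E × E // q.1 ≠ q.2} : ℝ) ≤ Real.exp (2 * l) := by
    have h1 : Fintype.card {q : E × E // q.1 ≠ q.2} ≤ Fintype.card E * Fintype.card E := by
      rw [← Fintype.card_prod]
      exact Fintype.card_subtype_le _
    have h2 : Real.exp (2 * l) = Fintype.card E * Fintype.card E := by
      rw [two_mul, Real.exp_add, hl, Real.exp_log (by linarith)]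
    rw [h2]
    exact_mod_cast h1
  have hsum : ∑ ε : Fin m → Bool, Real.exp (t * lipSeminorm (F ε)) ≤ 2 ^ m * Real.exp (4 * l) := by
    calc ∑ ε : Fin m → Bool, Real.exp (t * lipSeminorm (F ε))
        ≤ ∑ ε : Fin m → Bool, ∑ q : {q : E × E // q.1 ≠ q.2},
          Real.exp (t * ∑ i, (if ε i then (1 : ℝ) else -1) * X q i) :=
          Finset.sum_le_sum fun ε _ => hexp ε
      _ = ∑ q : {q : E × E // q.1 ≠ q.2}, ∑ ε : Fin m → Bool,
          Real.exp (t * ∑ i, (if ε i then (1 : ℝ) else -1) * X q i) := by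
          rw [Finset.sum_comm]
      _ ≤ ∑ q : {q : E × E // q.1 ≠ q.2}, 2 ^ m * Real.exp (t ^ 2 * m / 2) :=
          Finset.sum_le_sum fun q _ => aux_mgf m (X q) (hX1 q) t
      _ = Fintype.card {q : E × E // q.1 ≠ q.2} * (2 ^ m * Real.exp (2 * l)) := by
          rw [Finset.sum_const, Finset.card_univ, nsmul_eq_mul, ht2]
          congr 3
          ring
      _ ≤ Real.exp (2 * l) * (2 ^ m * Real.exp (2 * l)) := by gcongr
      _ = 2 ^ m * Real.exp (4 * l) := by
          rw [show 4 * l = 2 * l + 2 * l by ring, Real.exp_add]; ring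
  have key : t ^ 2 * ∑ ε : Fin m → Bool, lipSeminorm (F ε) ^ 2 ≤ 2 ^ m * (16 * l ^ 2 + 8 * l) := by
    calc t ^ 2 * ∑ ε : Fin m → Bool, lipSeminorm (F ε) ^ 2
        = ∑ ε : Fin m → Bool, (t * lipSeminorm (F ε)) ^ 2 := by
          rw [Finset.mul_sum]
          exact Finset.sum_congr rfl fun _ _ => by ring
      _ ≤ ∑ ε : Fin m → Bool, ((4 * l) ^ 2 + 2 * (4 * l) * Real.exp (t * lipSeminorm (F ε) - 4 * l)) :=
          Finset.sum_le_sum fun ε _ =>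
            aux_sq _ _ (by linarith) (mul_nonneg ht0 (hL0 ε))
      _ = 2 ^ m * (16 * l ^ 2)
          + 8 * l * Real.exp (-(4 * l)) * ∑ ε : Fin m → Bool, Real.exp (t * lipSeminorm (F ε)) := by
          rw [Finset.sum_add_distrib, Finset.mul_sum]
          congr 1
          · simp
            ring
          · refine Finset.sum_congr rfl fun ε _ => ?_
            rw [sub_eq_add_neg, Real.exp_add]; ring
      _ ≤ 2 ^ m * (16 * l ^ 2)
          + 8 * l * Real.exp (-(4 * l)) * (2 ^ m * Real.exp (4 * l)) := by
          gcongr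
      _ = 2 ^ m * (16 * l ^ 2 + 8 * l) := by
          have h : Real.exp (-(4 * l)) * Real.exp (4 * l) = 1 := by
            rw [← Real.exp_add]; simp
          linear_combination (8 * l * 2 ^ m) * h
  set S := ∑ ε : Fin m → Bool, lipSeminorm (F ε) ^ 2 with hS
  have h2m : (0 : ℝ) < 2 ^ m := by positivity
  have hl0 : 0 < l := by linarith
  have hfin : S ≤ 2 ^ m * (14 * m * l) := by
    have h1 : 4 * l * S ≤ 4 * l * (2 ^ m * (14 * m * l)) := by
      calc 4 * l * S = m * (t ^ 2 * S) := by rw [← ht2]; ring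
        _ ≤ m * (2 ^ m * (16 * l ^ 2 + 8 * l)) := by gcongr
        _ ≤ m * (2 ^ m * (56 * l ^ 2)) := by
            gcongr
            nlinarith
        _ = 4 * l * (2 ^ m * (14 * m * l)) := by ring
    exact le_of_mul_le_mul_left h1 (by positivity)
  rw [one_div, inv_mul_le_iff₀ h2m]
  exact hfin
end

section
/- Let (E,d_E) be a metric space, let m, n ∈ ℕ, and let x_{i,j} ∈ E and y_{i,j} ∈ E for 1 ≤ i ≤ m and 1 ≤ j ≤ n. Let s₁,…,s_m be independent Rademacher random variables (ℙ(s_i = 1) = ℙ(s_i = −1) = 1/2). Then 𝔼 sup_{‖f‖_Lip ≤ 1} ∑_{i=1}^m s_i ∑_{j=1}^n (f(x_{i,j}) − f(y_{i,j})) ≥ (1/√(28·m·ln(2mn))) · ∑_{i=1}^m sup_{‖f‖_Lip ≤ 1} ∑_{j=1}^n (f(x_{i,j}) − f(y_{i,j})), where the suprema are over all f : E → ℝ with ‖f‖_Lip ≤ 1. -/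
open MeasureTheory Filter

/-- The sign attached to a boolean. -/
noncomputable def sgnB (b : Bool) : ℝ := if b then (1 : ℝ) else -1

lemma sgnB_abs (b : Bool) : |sgnB b| = 1 := by
  cases b <;> simp [sgnB]

lemma sgnB_exp_sum {m : ℕ} (a : Fin m → ℝ) :
    ∑ ε : Fin m → Bool, Real.exp (∑ i, sgnB (ε i) * a i) ≤ 2 ^ m * Real.exp (∑ i, a i ^ 2 / 2) := by
  have h1 : ∑ ε : Fin m → Bool, Real.exp (∑ i, sgnB (ε i) * a i)
      = ∏ i, ∑ b : Bool, Real.exp (sgnB b * a i) := by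
    rw [Finset.prod_univ_sum]
    simp only [Fintype.piFinset_univ, Real.exp_sum]
  rw [h1, Real.exp_sum]
  have h2 : (2 : ℝ) ^ m = ∏ _i : Fin m, (2 : ℝ) := by simp
  rw [h2, ← Finset.prod_mul_distrib]
  apply Finset.prod_le_prod
  · intro i _
    positivity
  · intro i _
    have := Real.cosh_le_exp_half_sq (a i)
    rw [Real.cosh_eq] at this
    simp [sgnB]
    linarith

lemma sgnB_tail {m : ℕ} (hm : 1 ≤ m) (a : Fin m → ℝ) (ha : ∀ i, |a i| ≤ 1) (t : ℝ) (ht : 0 ≤ t) :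
    ((Finset.univ.filter (fun ε : Fin m → Bool => t < ∑ i, sgnB (ε i) * a i)).card : ℝ)
      ≤ 2 ^ m * Real.exp (-(t ^ 2 / (2 * m))) := by
  have hm0 : (0 : ℝ) < m := by exact_mod_cast hm
  set l : ℝ := t / m with hl
  have hl0 : 0 ≤ l := by positivity
  have h1 := sgnB_exp_sum (fun i => l * a i)
  have h2 : ((Finset.univ.filter (fun ε : Fin m → Bool => t < ∑ i, sgnB (ε i) * a i)).card : ℝ)
      * Real.exp (l * t) ≤ ∑ ε : Fin m → Bool, Real.exp (∑ i, sgnB (ε i) * (l * a i)) := by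
    rw [← nsmul_eq_mul, ← Finset.sum_const]
    refine le_trans (Finset.sum_le_sum ?_)
      (Finset.sum_le_sum_of_subset_of_nonneg (Finset.filter_subset _ _) ?_)
    · intro ε hε
      rw [Finset.mem_filter] at hε
      apply Real.exp_le_exp.mpr
      have : ∑ i, sgnB (ε i) * (l * a i) = l * ∑ i, sgnB (ε i) * a i := by
        rw [Finset.mul_sum]
        exact Finset.sum_congr rfl (fun i _ => by ring)
      rw [this]
      exact mul_le_mul_of_nonneg_left hε.2.le hl0
    · intro ε _ _
      positivity
  have h3 : ∑ i, (l * a i) ^ 2 / 2 ≤ m * (l ^ 2 / 2) := by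
    have : ∑ i : Fin m, (l * a i) ^ 2 / 2 ≤ ∑ i : Fin m, l ^ 2 / 2 := by
      apply Finset.sum_le_sum
      intro i _
      have h4 : (a i) ^ 2 ≤ 1 := by
        rw [sq_le_one_iff_abs_le_one]
        exact ha i
      have : (l * a i) ^ 2 ≤ l ^ 2 := by
        rw [mul_pow]
        nlinarith [sq_nonneg l]
      linarith
    simpa using this
  have h5 := h2.trans (h1.trans (mul_le_mul_of_nonneg_left (Real.exp_le_exp.mpr h3) (by positivity)))
  have h6 : -(t ^ 2 / (2 * m)) = m * (l ^ 2 / 2) - l * t := by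
    rw [hl]
    field_simp
    ring
  rw [h6, Real.exp_sub, mul_div_assoc', le_div_iff₀ (Real.exp_pos _)]
  exact h5

lemma sgnB_orth {m : ℕ} (i k : Fin m) :
    ∑ ε : Fin m → Bool, sgnB (ε i) * sgnB (ε k) = if i = k then (2 : ℝ) ^ m else 0 := by
  split_ifs with h
  · subst h
    have : ∀ ε : Fin m → Bool, sgnB (ε i) * sgnB (ε i) = 1 := by
      intro ε
      cases ε i <;> simp [sgnB]
    simp [this]
  · apply Finset.sum_involution (fun ε _ => Function.update ε i (!(ε i)))
    · intro ε _
      have hk : k ≠ i := fun e => h e.symm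
      simp only [Function.update_self, Function.update_of_ne hk]
      cases ε i <;> cases ε k <;> simp [sgnB]
    · intro ε _ _ he
      have := congrFun he i
      simp at this
    · intro ε _
      simp
    · intro ε _
      simp

section main
variable {E : Type*} [MetricSpace E]

/-- The functional of the block `i`. -/
noncomputable def blk {m n : ℕ} (x y : Fin m → Fin n → E) (i : Fin m) (f : E → ℝ) : ℝ :=
  ∑ j : Fin n, (f (x i j) - f (y i j))

lemma blk_le {m n : ℕ} (x y : Fin m → Fin n → E) (i : Fin m) (f : E → ℝ) (hf : LipschitzWith 1 f) :
    |blk x y i f| ≤ ∑ j : Fin n, dist (x i j) (y i j) := by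
  refine (Finset.abs_sum_le_sum_abs _ _).trans (Finset.sum_le_sum fun j _ => ?_)
  have := hf.dist_le_mul (x i j) (y i j)
  simpa [Real.dist_eq] using this

lemma blk_bdd {m n : ℕ} (x y : Fin m → Fin n → E) (i : Fin m) :
    BddAbove (Set.range fun f : {f : E → ℝ // LipschitzWith 1 f} => blk x y i f.1) :=
  ⟨_, by
    rintro _ ⟨f, rfl⟩
    exact (le_abs_self _).trans (blk_le x y i f.1 f.2)⟩

lemma comb_bdd {m n : ℕ} (x y : Fin m → Fin n → E) (ε : Fin m → Bool) :
    BddAbove (Set.range fun f : {f : E → ℝ // LipschitzWith 1 f} =>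
      ∑ i, sgnB (ε i) * blk x y i f.1) :=
  ⟨∑ i, ∑ j : Fin n, dist (x i j) (y i j), by
    rintro _ ⟨f, rfl⟩
    refine Finset.sum_le_sum fun i _ => ?_
    refine (le_abs_self _).trans ?_
    rw [abs_mul, sgnB_abs, one_mul]
    exact blk_le x y i f.1 f.2⟩

lemma abs_blk_le_sup {m n : ℕ} (x y : Fin m → Fin n → E) (i : Fin m) (f : E → ℝ)
    (hf : LipschitzWith 1 f) :
    |blk x y i f| ≤ ⨆ f : {f : E → ℝ // LipschitzWith 1 f}, blk x y i f.1 := by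
  apply abs_le'.mpr
  refine ⟨le_ciSup (blk_bdd x y i) ⟨f, hf⟩, ?_⟩
  have h := le_ciSup (blk_bdd x y i) ⟨fun z => - f z, hf.neg⟩
  refine le_trans (le_of_eq ?_) h
  simp only [blk]
  rw [← Finset.sum_neg_distrib]
  exact Finset.sum_congr rfl (fun j _ => by ring)

/-- Random combination of the functions. -/
noncomputable def rc {m : ℕ} (f : Fin m → E → ℝ) (ε : Fin m → Bool) (z : E) : ℝ :=
  ∑ k, sgnB (ε k) * f k z

lemma blk_rc {m n : ℕ} (x y : Fin m → Fin n → E) (f : Fin m → E → ℝ) (ε : Fin m → Bool)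
    (i : Fin m) : blk x y i (rc f ε) = ∑ k, sgnB (ε k) * blk x y i (f k) := by
  simp only [blk, rc, ← Finset.sum_sub_distrib, Finset.mul_sum]
  rw [Finset.sum_comm]
  refine Finset.sum_congr rfl fun k _ => Finset.sum_congr rfl fun j _ => by ring

lemma sum_Z {m n : ℕ} (x y : Fin m → Fin n → E) (f : Fin m → E → ℝ) :
    ∑ ε : Fin m → Bool, ∑ i, sgnB (ε i) * blk x y i (rc f ε)
      = 2 ^ m * ∑ i, blk x y i (f i) := by
  simp only [blk_rc, Finset.mul_sum]
  rw [Finset.sum_comm]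
  refine Finset.sum_congr rfl fun i _ => ?_
  rw [Finset.sum_comm]
  have : ∀ k : Fin m, ∑ ε : Fin m → Bool, sgnB (ε i) * (sgnB (ε k) * blk x y i (f k))
      = (if i = k then (2 : ℝ) ^ m else 0) * blk x y i (f k) := by
    intro k
    rw [← sgnB_orth, Finset.sum_mul]
    exact Finset.sum_congr rfl fun ε _ => by ring
  simp [this]

/-- All the points. -/
def pts {m n : ℕ} (x y : Fin m → Fin n → E) (p : Bool × Fin m × Fin n) : E :=
  if p.1 then x p.2.1 p.2.2 else y p.2.1 p.2.2

lemma good_le {m n : ℕ} (x y : Fin m → Fin n → E) (f : Fin m → E → ℝ) (ε : Fin m → Bool)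
    (K : ℝ) (hK : 0 < K)
    (hg : ∀ p q, rc f ε (pts x y p) - rc f ε (pts x y q) ≤ K * dist (pts x y p) (pts x y q)) :
    ∑ i, sgnB (ε i) * blk x y i (rc f ε) ≤
      K * ⨆ f : {f : E → ℝ // LipschitzWith 1 f}, ∑ i, sgnB (ε i) * blk x y i f.1 := by
  have hL : LipschitzOnWith 1 (fun z => rc f ε z / K) (Set.range (pts x y)) := by
    apply LipschitzOnWith.of_dist_le_mul
    rintro _ ⟨p, rfl⟩ _ ⟨q, rfl⟩
    rw [Real.dist_eq, ← sub_div, abs_div, abs_of_pos hK, div_le_iff₀ hK]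
    have h1 := hg p q
    have h2 := hg q p
    rw [dist_comm] at h2
    apply abs_le'.mpr
    constructor <;> simp <;> linarith
  obtain ⟨g, hg1, hg2⟩ := hL.extend_real
  have h := le_ciSup (comb_bdd x y ε) ⟨g, hg1⟩
  refine le_trans (le_of_eq ?_) (mul_le_mul_of_nonneg_left h hK.le)
  rw [Finset.mul_sum]
  refine Finset.sum_congr rfl fun i _ => ?_
  have : blk x y i (rc f ε) = K * blk x y i g := by
    simp only [blk, Finset.mul_sum]
    refine Finset.sum_congr rfl fun j _ => ?_
    have h1 := hg2 ⟨(true, i, j), rfl⟩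
    have h2 := hg2 ⟨(false, i, j), rfl⟩
    simp [pts] at h1 h2
    rw [← h1, ← h2]
    field_simp
  rw [this]
  ring

lemma bad_le {m n : ℕ} (x y : Fin m → Fin n → E) (f : Fin m → E → ℝ)
    (hf : ∀ k, LipschitzWith 1 (f k)) (ε : Fin m → Bool) :
    ∑ i, sgnB (ε i) * blk x y i (rc f ε) ≤
      m * ∑ i, ⨆ f : {f : E → ℝ // LipschitzWith 1 f}, blk x y i f.1 := by
  rw [Finset.mul_sum]
  refine Finset.sum_le_sum fun i _ => ?_
  refine (le_abs_self _).trans ?_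
  rw [abs_mul, sgnB_abs, one_mul, blk_rc]
  refine (Finset.abs_sum_le_sum_abs _ _).trans ?_
  have : ∀ k ∈ (Finset.univ : Finset (Fin m)), |sgnB (ε k) * blk x y i (f k)| ≤
      ⨆ f : {f : E → ℝ // LipschitzWith 1 f}, blk x y i f.1 := by
    intro k _
    rw [abs_mul, sgnB_abs, one_mul]
    exact abs_blk_le_sup x y i _ (hf k)
  simpa using Finset.sum_le_sum this

lemma pair_tail {m : ℕ} (hm : 1 ≤ m) (f : Fin m → E → ℝ)
    (hf : ∀ k, LipschitzWith 1 (f k)) (K : ℝ) (hK : 0 ≤ K) (p q : E) :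
    ((Finset.univ.filter (fun ε : Fin m → Bool => K * dist p q < rc f ε p - rc f ε q)).card : ℝ)
      ≤ 2 ^ m * Real.exp (-(K ^ 2 / (2 * m))) := by
  rcases eq_or_ne p q with rfl | hpq
  · simp
    positivity
  · have hd : 0 < dist p q := dist_pos.mpr hpq
    have h := sgnB_tail hm (fun i => (f i p - f i q) / dist p q) (fun i => by
      rw [abs_div, abs_of_pos hd, div_le_one hd]
      have := (hf i).dist_le_mul p q
      simpa [Real.dist_eq] using this) K hK
    refine le_trans (le_of_eq ?_) h
    congr 2
    ext ε
    simp only [Finset.mem_filter, Finset.mem_univ, true_and]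
    have : ∑ i, sgnB (ε i) * ((f i p - f i q) / dist p q) = (rc f ε p - rc f ε q) / dist p q := by
      simp only [rc, ← Finset.sum_sub_distrib, Finset.sum_div]
      exact Finset.sum_congr rfl fun i _ => by ring
    rw [this, lt_div_iff₀ hd]

lemma core {m n : ℕ} (hm : 1 ≤ m) (hn : 1 ≤ n) (x y : Fin m → Fin n → E) (f : Fin m → E → ℝ)
    (hf : ∀ k, LipschitzWith 1 (f k)) (K : ℝ) (hK : K = Real.sqrt (7 * m * Real.log (2 * m * n))) :
    2 ^ m * ∑ i, blk x y i (f i) ≤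
      K * ∑ ε : Fin m → Bool,
        (⨆ f : {f : E → ℝ // LipschitzWith 1 f}, ∑ i, sgnB (ε i) * blk x y i f.1)
      + 2 ^ m / 2 * ∑ i, ⨆ f : {f : E → ℝ // LipschitzWith 1 f}, blk x y i f.1 := by
  classical
  have hm1 : (1 : ℝ) ≤ m := by exact_mod_cast hm
  have hn1 : (1 : ℝ) ≤ n := by exact_mod_cast hn
  have hmn : (m : ℝ) ≤ m * n := by nlinarith
  set N : ℝ := 2 * m * n with hN
  have hN2 : 2 * (m : ℝ) ≤ N := by rw [hN]; linarith
  have hN0 : 0 < N := by linarith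
  have hlog : 0 < Real.log N := Real.log_pos (by linarith)
  have hK0 : 0 < K := by
    rw [hK]
    positivity
  have hK2 : K ^ 2 = 7 * m * Real.log N := by
    rw [hK, Real.sq_sqrt (by positivity)]
  set S := ∑ i, ⨆ f : {f : E → ℝ // LipschitzWith 1 f}, blk x y i f.1 with hS
  have hS0 : 0 ≤ S := Finset.sum_nonneg fun i _ =>
    (abs_nonneg _).trans (abs_blk_le_sup x y i (f i) (hf i))
  set Y : (Fin m → Bool) → ℝ := fun ε =>
    ⨆ f : {f : E → ℝ // LipschitzWith 1 f}, ∑ i, sgnB (ε i) * blk x y i f.1 with hY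
  have hY0 : ∀ ε, 0 ≤ Y ε := by
    intro ε
    have h := le_ciSup (comb_bdd x y ε) ⟨fun _ => 0, LipschitzWith.const' 0⟩
    refine le_trans (le_of_eq ?_) h
    simp [blk]
  set B : Finset (Fin m → Bool) := Finset.univ.biUnion
    (fun pq : (Bool × Fin m × Fin n) × (Bool × Fin m × Fin n) =>
      Finset.univ.filter (fun ε : Fin m → Bool =>
        K * dist (pts x y pq.1) (pts x y pq.2) <
          rc f ε (pts x y pq.1) - rc f ε (pts x y pq.2))) with hB
  have hBc : (B.card : ℝ) ≤ N ^ 2 * (2 ^ m * Real.exp (-(K ^ 2 / (2 * m)))) := by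
    have h1 : (B.card : ℝ) ≤ ∑ pq : (Bool × Fin m × Fin n) × (Bool × Fin m × Fin n),
        ((Finset.univ.filter (fun ε : Fin m → Bool =>
        K * dist (pts x y pq.1) (pts x y pq.2) <
          rc f ε (pts x y pq.1) - rc f ε (pts x y pq.2))).card : ℝ) := by
      exact_mod_cast Finset.card_biUnion_le
    refine h1.trans ((Finset.sum_le_sum fun pq _ => pair_tail hm f hf K hK0.le _ _).trans
      (le_of_eq ?_))
    rw [Finset.sum_const, nsmul_eq_mul]
    congr 1
    simp [hN]
    ring
  have hexp : Real.exp (-(K ^ 2 / (2 * m))) ≤ (N ^ 3)⁻¹ := by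
    have h1 : -(K ^ 2 / (2 * m)) ≤ -(3 * Real.log N) := by
      rw [hK2]
      have : 7 * m * Real.log N / (2 * m) = 7 / 2 * Real.log N := by
        field_simp
      rw [this]
      linarith
    refine (Real.exp_le_exp.mpr h1).trans (le_of_eq ?_)
    have h2 : 3 * Real.log N = Real.log (N ^ 3) := by
      rw [Real.log_pow]
      norm_num
    rw [Real.exp_neg, h2, Real.exp_log (by positivity)]
  have hBm : (B.card : ℝ) * m ≤ 2 ^ m / 2 := by
    have h1 : (B.card : ℝ) ≤ N ^ 2 * (2 ^ m * (N ^ 3)⁻¹) := hBc.trans (by gcongr)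
    have h2 : N ^ 2 * (2 ^ m * (N ^ 3)⁻¹) = 2 ^ m / N := by
      field_simp
    rw [h2, le_div_iff₀ hN0] at h1
    have h3 : (0 : ℝ) ≤ B.card := by positivity
    nlinarith
  rw [← sum_Z x y f, ← Finset.sum_add_sum_compl B]
  have hb : ∑ ε ∈ B, ∑ i, sgnB (ε i) * blk x y i (rc f ε) ≤ 2 ^ m / 2 * S := by
    refine (Finset.sum_le_sum fun ε _ => bad_le x y f hf ε).trans ?_
    rw [Finset.sum_const, nsmul_eq_mul, ← mul_assoc]
    exact mul_le_mul_of_nonneg_right hBm hS0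
  have hgd : ∑ ε ∈ Bᶜ, ∑ i, sgnB (ε i) * blk x y i (rc f ε) ≤ K * ∑ ε, Y ε := by
    have h1 : ∑ ε ∈ Bᶜ, ∑ i, sgnB (ε i) * blk x y i (rc f ε) ≤ ∑ ε ∈ Bᶜ, K * Y ε := by
      refine Finset.sum_le_sum fun ε hε => ?_
      apply good_le x y f ε K hK0
      intro p q
      by_contra hc
      rw [Finset.mem_compl] at hε
      apply hε
      rw [hB, Finset.mem_biUnion]
      refine ⟨(p, q), Finset.mem_univ _, ?_⟩
      rw [Finset.mem_filter]
      exact ⟨Finset.mem_univ _, not_le.mp hc⟩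
    rw [Finset.mul_sum]
    exact h1.trans (Finset.sum_le_sum_of_subset_of_nonneg (Finset.subset_univ _)
      fun ε _ _ => mul_nonneg hK0.le (hY0 ε))
  linarith

lemma core2 {m n : ℕ} (hm : 1 ≤ m) (hn : 1 ≤ n) (x y : Fin m → Fin n → E)
    (K : ℝ) (hK : K = Real.sqrt (7 * m * Real.log (2 * m * n))) :
    2 ^ m / 2 * ∑ i, (⨆ f : {f : E → ℝ // LipschitzWith 1 f}, blk x y i f.1) ≤
      K * ∑ ε : Fin m → Bool,
        (⨆ f : {f : E → ℝ // LipschitzWith 1 f}, ∑ i, sgnB (ε i) * blk x y i f.1) := by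
  apply le_of_forall_pos_le_add
  intro δ hδ
  have hm1 : (0 : ℝ) < m := by exact_mod_cast hm
  haveI : Nonempty {f : E → ℝ // LipschitzWith 1 f} := ⟨⟨fun _ => 0, LipschitzWith.const' 0⟩⟩
  set η : ℝ := δ / (2 ^ m * m) with hη
  have hη0 : 0 < η := by positivity
  have hex : ∀ i : Fin m, ∃ f : {f : E → ℝ // LipschitzWith 1 f},
      (⨆ f : {f : E → ℝ // LipschitzWith 1 f}, blk x y i f.1) - η < blk x y i f.1 := fun i =>
    exists_lt_of_lt_ciSup (sub_lt_self _ hη0)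
  choose f hf using hex
  have h := core hm hn x y (fun i => (f i).1) (fun i => (f i).2) K hK
  have h2 := Finset.sum_le_sum (s := Finset.univ) (fun i _ => (hf i).le)
  rw [Finset.sum_sub_distrib] at h2
  simp only [Finset.sum_const, Finset.card_univ, Fintype.card_fin, nsmul_eq_mul] at h2
  have h3 := mul_le_mul_of_nonneg_left h2 (by positivity : (0 : ℝ) ≤ 2 ^ m)
  have h4 : (2 : ℝ) ^ m * (m * η) = δ := by
    rw [hη]
    field_simp
  rw [mul_sub, h4] at h3
  linarith

end main

/-- **Lemma (w1prelb).** Let `(E, d_E)` be a metric space and `x_{i,j}, y_{i,j} ∈ E`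
for `1 ≤ i ≤ m`, `1 ≤ j ≤ n`. Let `s₁, …, s_m` be independent Rademacher random
variables (modeled by averaging over all sign patterns `ε : Fin m → Bool`, with
`s_i = 1` if `ε i` and `s_i = −1` otherwise). Then
`𝔼 sup_{‖f‖_Lip ≤ 1} ∑_i s_i ∑_j (f(x_{i,j}) − f(y_{i,j}))
  ≥ (1/√(28 m ln(2mn))) ∑_i sup_{‖f‖_Lip ≤ 1} ∑_j (f(x_{i,j}) − f(y_{i,j}))`,
the suprema being over all `f : E → ℝ` with Lipschitz constant at most `1`. -/
theorem stmt_17 {E : Type*} [MetricSpace E] (m n : ℕ) (hm : 1 ≤ m) (hn : 1 ≤ n)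
    (x y : Fin m → Fin n → E) :
    (1 / Real.sqrt (28 * m * Real.log (2 * m * n))) *
        ∑ i : Fin m,
          ⨆ f : {f : E → ℝ // LipschitzWith 1 f},
            ∑ j : Fin n, (f.1 (x i j) - f.1 (y i j))
      ≤ (1 / 2 ^ m : ℝ) *
          ∑ ε : Fin m → Bool,
            ⨆ f : {f : E → ℝ // LipschitzWith 1 f},
              ∑ i : Fin m, (if ε i then (1 : ℝ) else -1) *
                ∑ j : Fin n, (f.1 (x i j) - f.1 (y i j)) := by
  have h := core2 hm hn x y _ rfl
  simp only [blk, sgnB] at h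
  have hm1 : (1 : ℝ) ≤ m := by exact_mod_cast hm
  have hn1 : (1 : ℝ) ≤ n := by exact_mod_cast hn
  have hmn : (m : ℝ) ≤ m * n := by nlinarith
  have hlog : 0 < Real.log (2 * m * n) := Real.log_pos (by linarith)
  have hs : Real.sqrt (28 * m * Real.log (2 * m * n))
      = 2 * Real.sqrt (7 * m * Real.log (2 * m * n)) := by
    rw [show 28 * (m : ℝ) * Real.log (2 * m * n) = 2 ^ 2 * (7 * m * Real.log (2 * m * n)) by ring,
      Real.sqrt_mul (by positivity), Real.sqrt_sq (by norm_num)]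
  rw [hs]
  have hK0 : 0 < Real.sqrt (7 * m * Real.log (2 * m * n)) := by positivity
  rw [one_div_mul_eq_div, one_div_mul_eq_div, div_le_div_iff₀ (by positivity) (by positivity)]
  linarith
end
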